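/- Simulation of RPP: for every f ∈ RPP^k and integers n₁,…,n_k with f(n₁,…,n_k) = (m₁,…,m_k), the iso isos(f) applied to the tuple of encodings (n̄₁,…,n̄_k) evaluates to (m̄₁,…,m̄_k). Consequently, every primitive recursive function can be represented by a well-typed iso. -/

import Mathlib

/-!
Simulation. A clause of a translated iso binds pairwise distinct variables, so an entire run of its
body is governed by one closed environment: each `let` merely enlarges the set of instantiated
variables (`LinRev.let_steps`). Induction on the RPP function then gives `LinRev.simulation`. The
auxiliary recursive iso of an iteration is treated by induction on the number of repetitions, and a
selection is decided by the sign of the control value, which the encoding exposes.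

Typing (`LinRev.isosOf_ty`) is again an induction on the function. The left-hand and right-hand
sides of the clauses of an iteration or selection are orthogonal and exhaustive because, up to names
of variables, they differ only in the last component, where they analyse the sign of an integer or
the shape of a positive number; the recursion is structural as the only recursive call is on a
predecessor in the last component.

Primitive recursive functions. RPP functions are composed conveniently as reversible register
programs, built from increments, decrements, loops and selections whose control register is not
touched by their body; since RPP contains all permutations of wires, every such program is an RPP
function (`RPPx.Prog.comp_of_wf`). By induction on a primitive recursive `g` there is a program that
adds `g` of its inputs to an output register and restores all scratch registers to zero
(`RPPx.Prog.exists_computes`). Composition computes intermediate results, copies the final result,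
and runs the computation backwards. In a primitive recursion each round overwrites the current
value, which a reversible program cannot do; instead the old value is pushed on a stack. A stack
is one number, where pushing replaces a pair of registers `(a, b)` by `(0, code a b)`. The code is
that of the antidiagonal enumeration of pairs: a single step of the enumeration is reversible, and
running it backwards `code a b` times takes `(a, b)` to `(0, 0)`, after which the number `code a b`,
computed beforehand, is moved into the second register (`RPPx.Prog.run_push`).
-/

namespace RPPx

/-- Recursive Primitive Permutations, inductively generated by arity. -/
inductive RPP : ℕ → Type
  | id : RPP 1
  | suc : RPP 1
  | pre : RPP 1
  | sign : RPP 1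
  | swap : RPP 2
  | comp {k : ℕ} (f g : RPP k) : RPP k
  | par {k l : ℕ} (f : RPP k) (g : RPP l) : RPP (k + l)
  | it {k : ℕ} (f : RPP k) : RPP (k + 1)
  | ite {k : ℕ} (f g h : RPP k) : RPP (k + 1)

/-- The semantics of an RPP function, as a map `ℤ^k → ℤ^k`. -/
def eval : ∀ {k : ℕ}, RPP k → (Fin k → ℤ) → (Fin k → ℤ)
  | _, .id => fun v => v
  | _, .suc => fun v i => v i + 1
  | _, .pre => fun v i => v i - 1
  | _, .sign => fun v i => -(v i)
  | _, .swap => fun v i => v i.rev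
  | _, .comp f g => fun v => eval g (eval f v)
  | _, @RPP.par k l f g =>
      fun v => Fin.append (eval f (v ∘ Fin.castAdd l)) (eval g (v ∘ Fin.natAdd k))
  | _, @RPP.it k f =>
      fun v => Fin.snoc ((eval f)^[(v (Fin.last k)).natAbs] (Fin.init v)) (v (Fin.last k))
  | _, @RPP.ite k f g h =>
      fun v => Fin.snoc
        ((if 0 < v (Fin.last k) then eval f
          else if v (Fin.last k) = 0 then eval g else eval h) (Fin.init v))
        (v (Fin.last k))

/-- The structurally defined inverse of an RPP function. -/
def inv : ∀ {k : ℕ}, RPP k → RPP k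
  | _, .id => .id
  | _, .suc => .pre
  | _, .pre => .suc
  | _, .sign => .sign
  | _, .swap => .swap
  | _, .comp f g => .comp (inv g) (inv f)
  | _, .par f g => .par (inv f) (inv g)
  | _, .it f => .it (inv f)
  | _, .ite f g h => .ite (inv f) (inv g) (inv h)

end RPPx

namespace LinRev

/-! ## Types of the linear reversible language:  A ::= 1 | A⊕B | A⊗B | μX.A | X  -/

inductive Ty : Type
  | one : Ty
  | sum : Ty → Ty → Ty
  | prod : Ty → Ty → Ty
  | mu : Ty → Ty
  | tvar : ℕ → Ty
  deriving DecidableEq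

/-- Substitute type `T` for the (de Bruijn) type variable `n` in a type. -/
def Ty.substF : Ty → ℕ → Ty → Ty
  | .one, _, _ => .one
  | .sum A B, n, T => .sum (A.substF n T) (B.substF n T)
  | .prod A B, n, T => .prod (A.substF n T) (B.substF n T)
  | .mu A, n, T => .mu (A.substF (n + 1) T)
  | .tvar m, n, T => if m = n then T else .tvar m

/-- `A[X ← μX.A]`, the one-step unfolding of `μX.A` with body `A`. -/
def Ty.unfold (A : Ty) : Ty := A.substF 0 (.mu A)

/-! ## Values:  v ::= () | x | inl v | inr v | ⟨v,v⟩ | fold v  -/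

inductive Val : Type
  | unit : Val
  | var : ℕ → Val
  | inl : Val → Val
  | inr : Val → Val
  | pair : Val → Val → Val
  | fold : Val → Val
  deriving DecidableEq

/-- Free variables of a value. -/
def Val.fv : Val → Finset ℕ
  | .unit => ∅
  | .var x => {x}
  | .inl v => v.fv
  | .inr v => v.fv
  | .pair v w => v.fv ∪ w.fv
  | .fold v => v.fv

/-! ## Substitutions -/

/-- A substitution: a partial map from variables to values. -/
abbrev Sub := ℕ → Option Val

/-- The support of a substitution. -/
def Sub.supp (σ : Sub) : Set ℕ := {x | σ x ≠ none}

/-- Disjointness of supports. -/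
def Sub.disj (σ₁ σ₂ : Sub) : Prop := ∀ x, σ₁ x = none ∨ σ₂ x = none

/-- Union of two substitutions. -/
def Sub.union (σ₁ σ₂ : Sub) : Sub := fun x => (σ₁ x).orElse (fun _ => σ₂ x)

/-- Applying a substitution to a value. -/
def Val.applySub (σ : Sub) : Val → Val
  | .unit => .unit
  | .var x => (σ x).getD (.var x)
  | .inl v => .inl (v.applySub σ)
  | .inr v => .inr (v.applySub σ)
  | .pair v w => .pair (v.applySub σ) (w.applySub σ)
  | .fold v => .fold (v.applySub σ)

/-- The pattern-matching judgment `σ[p] = v`. -/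
inductive Matches : Sub → Val → Val → Prop
  | unit : Matches (fun _ => none) .unit .unit
  | var (x : ℕ) (v : Val) :
      Matches (fun y => if y = x then some v else none) (.var x) v
  | inl {σ p v} : Matches σ p v → Matches σ (.inl p) (.inl v)
  | inr {σ p v} : Matches σ p v → Matches σ (.inr p) (.inr v)
  | fold {σ p v} : Matches σ p v → Matches σ (.fold p) (.fold v)
  | pair {σ₁ σ₂ p₁ p₂ v₁ v₂} :
      Matches σ₁ p₁ v₁ → Matches σ₂ p₂ v₂ → Sub.disj σ₁ σ₂ →
      Matches (σ₁.union σ₂) (.pair p₁ p₂) (.pair v₁ v₂)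

/-! ## The exhaustivity/non-overlapping predicate `OD_A(S)` -/

def proj1 (S : Set Val) : Set Val := {v | ∃ w, Val.pair v w ∈ S}
def proj2 (S : Set Val) : Set Val := {w | ∃ v, Val.pair v w ∈ S}
def sect1 (S : Set Val) (v : Val) : Set Val := {w | Val.pair v w ∈ S}
def sect2 (S : Set Val) (w : Val) : Set Val := {v | Val.pair v w ∈ S}

inductive OD : Ty → Set Val → Prop
  | var (A : Ty) (x : ℕ) : OD A {Val.var x}
  | unit : OD .one {Val.unit}
  | sum {A B : Ty} {S T : Set Val} :
      OD A S → OD B T → OD (.sum A B) (Val.inl '' S ∪ Val.inr '' T)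
  | mu {A : Ty} {S : Set Val} :
      OD A.unfold S → OD (.mu A) (Val.fold '' S)
  | prodL {A B : Ty} {S : Set Val} :
      (∀ u ∈ S, ∃ v w, u = Val.pair v w) →
      OD A (proj1 S) → (∀ v ∈ proj1 S, OD B (sect1 S v)) →
      OD (.prod A B) S
  | prodR {A B : Ty} {S : Set Val} :
      (∀ u ∈ S, ∃ v w, u = Val.pair v w) →
      OD B (proj2 S) → (∀ w ∈ proj2 S, OD A (sect2 S w)) →
      OD (.prod A B) S

/-! ## Linear typing contexts (variables, at most one occurrence each) -/

abbrev Ctx := ℕ → Option Ty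

def Ctx.empty : Ctx := fun _ => none
def Ctx.single (x : ℕ) (A : Ty) : Ctx := fun y => if y = x then some A else none
def Ctx.disj (Γ Δ : Ctx) : Prop := ∀ x, Γ x = none ∨ Δ x = none
def Ctx.union (Γ Δ : Ctx) : Ctx := fun x => (Γ x).orElse (fun _ => Δ x)
def Ctx.unions (L : List Ctx) : Ctx := L.foldr Ctx.union Ctx.empty

/-- Linear typing of values: `Δ ⊢ v : A`. -/
inductive VTy : Ctx → Val → Ty → Prop
  | unit : VTy Ctx.empty .unit .one
  | var (x : ℕ) (A : Ty) : VTy (Ctx.single x A) (.var x) A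
  | inl {Γ v A B} : VTy Γ v A → VTy Γ (.inl v) (.sum A B)
  | inr {Γ v A B} : VTy Γ v B → VTy Γ (.inr v) (.sum A B)
  | fold {Γ v A} : VTy Γ v A.unfold → VTy Γ (.fold v) (.mu A)
  | pair {Γ Δ v w A B} :
      VTy Γ v A → VTy Δ w B → Ctx.disj Γ Δ →
      VTy (Γ.union Δ) (.pair v w) (.prod A B)

end LinRev
namespace LinRev

/-! ## Patterns, terms, isos -/

inductive Pat : Type
  | pvar : ℕ → Pat
  | ppair : Pat → Pat → Pat
  deriving DecidableEq

def Pat.toVal : Pat → Val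
  | .pvar x => .var x
  | .ppair p q => .pair p.toVal q.toVal

def Pat.vars : Pat → Finset ℕ
  | .pvar x => {x}
  | .ppair p q => p.vars ∪ q.vars

mutual
  inductive Term : Type
    | unit : Term
    | var : ℕ → Term
    | inl : Term → Term
    | inr : Term → Term
    | pair : Term → Term → Term
    | fold : Term → Term
    | app : Iso → Term → Term
    | lett : Pat → Term → Term → Term

  inductive Iso : Type
    | clauses : Clauses → Iso
    | fixI : ℕ → Iso → Iso
    | ivar : ℕ → Iso

  inductive Clauses : Type
    | nil : Clauses
    | cons : Val → Term → Clauses → Clauses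
end

def Clauses.toList : Clauses → List (Val × Term)
  | .nil => []
  | .cons v e r => (v, e) :: r.toList

def Val.toTerm : Val → Term
  | .unit => .unit
  | .var x => .var x
  | .inl v => .inl v.toTerm
  | .inr v => .inr v.toTerm
  | .pair v w => .pair v.toTerm w.toTerm
  | .fold v => .fold v.toTerm

def Pat.toTerm (p : Pat) : Term := p.toVal.toTerm

def Term.asVal : Term → Option Val
  | .unit => some .unit
  | .var x => some (.var x)
  | .inl t => t.asVal.map .inl
  | .inr t => t.asVal.map .inr
  | .pair a b =>
      match a.asVal, b.asVal with
      | some v, some w => some (.pair v w)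
      | _, _ => none
  | .fold t => t.asVal.map .fold
  | _ => none

def Term.asPat : Term → Option Pat
  | .var x => some (.pvar x)
  | .pair a b =>
      match a.asPat, b.asPat with
      | some p, some q => some (.ppair p q)
      | _, _ => none
  | _ => none

/-- `Val(e)`: the value at the end of a chain of lets. -/
def Term.valOf : Term → Option Val
  | .lett _ _ t₂ => t₂.valOf
  | t => t.asVal

/-- Free (term) variables of a term. -/
def Term.fvT : Term → Finset ℕ
  | .unit => ∅
  | .var x => {x}
  | .inl t => t.fvT
  | .inr t => t.fvT
  | .fold t => t.fvT
  | .pair a b => a.fvT ∪ b.fvT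
  | .app _ t => t.fvT
  | .lett p a b => a.fvT ∪ (b.fvT \ p.vars)

/-- Applying a (value) substitution to a term. -/
def Term.applySub (σ : Sub) : Term → Term
  | .unit => .unit
  | .var x => ((σ x).map Val.toTerm).getD (.var x)
  | .inl t => .inl (t.applySub σ)
  | .inr t => .inr (t.applySub σ)
  | .pair a b => .pair (a.applySub σ) (b.applySub σ)
  | .fold t => .fold (t.applySub σ)
  | .app ω t => .app ω (t.applySub σ)
  | .lett p a b => .lett p (a.applySub σ) (b.applySub σ)

/-! ## Substitution of iso-variables -/

mutual
  def Term.isoSub (f : ℕ) (w : Iso) : Term → Term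
    | .unit => .unit
    | .var x => .var x
    | .inl t => .inl (Term.isoSub f w t)
    | .inr t => .inr (Term.isoSub f w t)
    | .pair a b => .pair (Term.isoSub f w a) (Term.isoSub f w b)
    | .fold t => .fold (Term.isoSub f w t)
    | .app ω t => .app (Iso.isoSub f w ω) (Term.isoSub f w t)
    | .lett p a b => .lett p (Term.isoSub f w a) (Term.isoSub f w b)
  termination_by t => sizeOf t

  def Iso.isoSub (f : ℕ) (w : Iso) : Iso → Iso
    | .ivar g => if g = f then w else .ivar g
    | .fixI g ω => if g = f then .fixI g ω else .fixI g (Iso.isoSub f w ω)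
    | .clauses l => .clauses (Clauses.isoSub f w l)
  termination_by ω => sizeOf ω

  def Clauses.isoSub (f : ℕ) (w : Iso) : Clauses → Clauses
    | .nil => .nil
    | .cons v e r => .cons v (Term.isoSub f w e) (Clauses.isoSub f w r)
  termination_by l => sizeOf l
end

/-! ## Inversion of isos -/

mutual
  /-- The dual iso `ω⊥`. -/
  def Iso.inv : Iso → Iso
    | .ivar f => .ivar f
    | .fixI f ω => .fixI f ω.inv
    | .clauses l => .clauses l.inv
  termination_by ω => sizeOf ω

  def Clauses.inv : Clauses → Clauses
    | .nil => .nil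
    | .cons v e r =>
        match invAux (Val.toTerm v) e with
        | some (v', e') => .cons v' e' r.inv
        | none => .cons v e r.inv
  termination_by l => sizeOf l

  /-- Invert a clause body `let p₁ = ω₁ p₁' in … let pₙ = ωₙ pₙ' in v'`,
  reversing the lets and inverting each sub-iso; `acc` accumulates the result. -/
  def invAux : Term → Term → Option (Val × Term)
    | acc, .lett p (.app ω t) e =>
        match t.asPat with
        | some p' => invAux (.lett p' (.app ω.inv p.toTerm) acc) e
        | none => none
    | acc, t => t.asVal.map (fun v' => (v', acc))
  termination_by _ e => sizeOf e
end

end LinRev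
namespace LinRev

/-! ## Operational semantics (deterministic call-by-value) -/

inductive Step : Term → Term → Prop
  | inlC {t t'} : Step t t' → Step (.inl t) (.inl t')
  | inrC {t t'} : Step t t' → Step (.inr t) (.inr t')
  | foldC {t t'} : Step t t' → Step (.fold t) (.fold t')
  | pairL {t t'} (v : Val) : Step t t' → Step (.pair t v.toTerm) (.pair t' v.toTerm)
  | pairR {t t'} (v : Val) : Step t t' → Step (.pair v.toTerm t) (.pair v.toTerm t')
  | appC {ω t t'} : Step t t' → Step (.app ω t) (.app ω t')
  | lettC {p t₁ t₁' t₂} : Step t₁ t₁' → Step (.lett p t₁ t₂) (.lett p t₁' t₂)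
  | isoRec {f ω t} :
      Step (.app (.fixI f ω) t) (.app (Iso.isoSub f (.fixI f ω) ω) t)
  | lettE {σ : Sub} {p : Pat} {v : Val} {t : Term} :
      Matches σ p.toVal v → Step (.lett p v.toTerm t) (t.applySub σ)
  | isoApp {σ : Sub} {l : Clauses} {vi : Val} {e : Term} {v : Val} :
      (vi, e) ∈ l.toList → Matches σ vi v →
      Step (.app (.clauses l) v.toTerm) (e.applySub σ)

/-- Reflexive-transitive closure `→*`. -/
def Steps : Term → Term → Prop := Relation.ReflTransGen Step

/-! ## Structural recursion criterion -/

/-- Flatten a right-nested tensor type into its components. -/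
def Ty.tuple : Ty → List Ty
  | .prod A B => A :: B.tuple
  | A => [A]

/-- Flatten a right-nested pair value into its components. -/
def Val.tuple : Val → List Val
  | .pair a b => a :: b.tuple
  | v => [v]

/-- If a term is a tuple of variables `(x₁, …, xₘ)`, return the variables. -/
def Term.tupleVars : Term → Option (List ℕ)
  | .var x => some [x]
  | .pair (.var x) t => t.tupleVars.map (x :: ·)
  | _ => none

/-- Subterm relation on values. -/
inductive Val.SubV : Val → Val → Prop
  | refl (v : Val) : Val.SubV v v
  | inl {u v} : Val.SubV u v → Val.SubV u (.inl v)
  | inr {u v} : Val.SubV u v → Val.SubV u (.inr v)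
  | fold {u v} : Val.SubV u v → Val.SubV u (.fold v)
  | pairL {u v w} : Val.SubV u v → Val.SubV u (.pair v w)
  | pairR {u v w} : Val.SubV u w → Val.SubV u (.pair v w)

/- `RecCallT f p t` : the recursive call `f p` occurs as a subterm of `t`. -/
mutual
  inductive RecCallT : ℕ → Term → Term → Prop
    | here (f : ℕ) (p : Term) : RecCallT f p (.app (.ivar f) p)
    | inl {f p t} : RecCallT f p t → RecCallT f p (.inl t)
    | inr {f p t} : RecCallT f p t → RecCallT f p (.inr t)
    | fold {f p t} : RecCallT f p t → RecCallT f p (.fold t)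
    | pairL {f p t₁ t₂} : RecCallT f p t₁ → RecCallT f p (.pair t₁ t₂)
    | pairR {f p t₁ t₂} : RecCallT f p t₂ → RecCallT f p (.pair t₁ t₂)
    | appIso {f p ω t} : RecCallI f p ω → RecCallT f p (.app ω t)
    | appArg {f p ω t} : RecCallT f p t → RecCallT f p (.app ω t)
    | lett₁ {f p q t₁ t₂} : RecCallT f p t₁ → RecCallT f p (.lett q t₁ t₂)
    | lett₂ {f p q t₁ t₂} : RecCallT f p t₂ → RecCallT f p (.lett q t₁ t₂)

  inductive RecCallI : ℕ → Term → Iso → Prop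
    | clauses {f p l} : RecCallC f p l → RecCallI f p (.clauses l)
    | fixI {f g p ω} : RecCallI f p ω → g ≠ f → RecCallI f p (.fixI g ω)

  inductive RecCallC : ℕ → Term → Clauses → Prop
    | head {f p v e r} : RecCallT f p e → RecCallC f p (.cons v e r)
    | tail {f p v e r} : RecCallC f p r → RecCallC f p (.cons v e r)
end

/-- The structural recursion criterion for `fix f. {vᵢ ↔ eᵢ} : A ↔ C`:
some component `Aⱼ = μX.B` of the input type is such that in every clause,
if the `j`-th component of the pattern is closed there is no recursive call,
and otherwise every recursive call `f p` has `p` a tuple of variables whose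
`j`-th component is a strict subterm of the `j`-th pattern component. -/
def StructRecClauses (f : ℕ) (l : Clauses) (A : Ty) : Prop :=
  ∃ (j : ℕ) (B : Ty), A.tuple[j]? = some (Ty.mu B) ∧
    ∀ c ∈ l.toList, ∃ vj, (Val.tuple c.1)[j]? = some vj ∧
      ((vj.fv = ∅ ∧ ∀ p, ¬ RecCallT f p c.2) ∨
       (∀ p, RecCallT f p c.2 → ∃ xs : List ℕ,
          p.tupleVars = some xs ∧ xs.length = A.tuple.length ∧
          ∃ x, xs[j]? = some x ∧ Val.SubV (.var x) vj ∧ Val.var x ≠ vj))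

/-! ## Typing of terms and isos -/

/-- An iso-variable context: at most one iso-variable `f : A ↔ B`. -/
abbrev IsoCtx := Option (ℕ × Ty × Ty)

/-- Typing of let-patterns, producing the context of bound variables. -/
inductive PatTy : Pat → Ty → Ctx → Prop
  | pvar (x : ℕ) (A : Ty) : PatTy (.pvar x) A (Ctx.single x A)
  | ppair {p q A B Γ Δ} :
      PatTy p A Γ → PatTy q B Δ → Ctx.disj Γ Δ →
      PatTy (.ppair p q) (.prod A B) (Γ.union Δ)

mutual
  /-- Typing of terms: `Δ; Ψ ⊢ t : A`. -/
  inductive TermTy : Ctx → IsoCtx → Term → Ty → Prop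
    | unit (Ψ : IsoCtx) : TermTy Ctx.empty Ψ .unit .one
    | var (x : ℕ) (A : Ty) (Ψ : IsoCtx) : TermTy (Ctx.single x A) Ψ (.var x) A
    | inl {Γ Ψ t A B} : TermTy Γ Ψ t A → TermTy Γ Ψ (.inl t) (.sum A B)
    | inr {Γ Ψ t A B} : TermTy Γ Ψ t B → TermTy Γ Ψ (.inr t) (.sum A B)
    | fold {Γ Ψ t A} : TermTy Γ Ψ t A.unfold → TermTy Γ Ψ (.fold t) (.mu A)
    | pair {Γ Δ Ψ t₁ t₂ A B} :
        TermTy Γ Ψ t₁ A → TermTy Δ Ψ t₂ B → Ctx.disj Γ Δ →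
        TermTy (Γ.union Δ) Ψ (.pair t₁ t₂) (.prod A B)
    | appV {Γ Ψ ω t A B} :
        IsoTy Ψ ω A B → TermTy Γ Ψ t A → TermTy Γ Ψ (.app ω t) B
    | appC {Γ Ψ ω t A B} :
        IsoTy none ω A B → TermTy Γ Ψ t A → TermTy Γ Ψ (.app ω t) B
    | lett {Γ Δ Ξ Ψ p t₁ t₂ A B} :
        TermTy Γ Ψ t₁ A → PatTy p A Ξ → TermTy (Δ.union Ξ) Ψ t₂ B →
        Ctx.disj Γ Δ → Ctx.disj Δ Ξ →
        TermTy (Γ.union Δ) Ψ (.lett p t₁ t₂) B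

  /-- Typing of isos: `Ψ ⊢ ω : A ↔ B`. -/
  inductive IsoTy : IsoCtx → Iso → Ty → Ty → Prop
    | ivar (f : ℕ) (A B : Ty) : IsoTy (some (f, A, B)) (.ivar f) A B
    | fixI {f ω A B} (Ψ : IsoCtx) :
        IsoTy (some (f, A, B)) ω A B →
        (∀ l, ω = .clauses l → StructRecClauses f l A) →
        IsoTy Ψ (.fixI f ω) A B
    | clauses {Ψ l A B} (Γof : Val × Term → Ctx) :
        (∀ c ∈ Clauses.toList l, VTy (Γof c) c.1 A) →
        (∀ c ∈ Clauses.toList l, TermTy (Γof c) Ψ c.2 B) →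
        OD A {v | ∃ e, (v, e) ∈ Clauses.toList l} →
        OD B {w | ∃ c ∈ Clauses.toList l, Term.valOf c.2 = some w} →
        IsoTy Ψ (.clauses l) A B
end

/-! ## Explicit substitutions -/

/-- The substitution determined by an association list. -/
def Sub.ofList (L : List (ℕ × Val)) : Sub :=
  fun x => (L.find? (fun p => p.1 = x)).map Prod.snd

/-- `let σ in t` : a nested sequence of lets, one per binding. -/
def letSig (L : List (ℕ × Val)) (t : Term) : Term :=
  L.foldr (fun xv acc => .lett (.pvar xv.1) xv.2.toTerm acc) t

/-- The explicit let-propagation rules `→ₑₗₑₜ`. -/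
inductive ELet : Term → Term → Prop
  | letvar {x : ℕ} {v : Val} : ELet (.lett (.pvar x) v.toTerm (.var x)) v.toTerm
  | letpair {x : ℕ} {p : Pat} {t₁ t₂ t : Term} :
      ELet (.lett (.ppair (.pvar x) p) (.pair t₁ t₂) t)
           (.lett (.pvar x) t₁ (.lett p t₂ t))
  | pairL {x : ℕ} {v : Val} {t₁ t₂ : Term} : x ∈ t₁.fvT →
      ELet (.lett (.pvar x) v.toTerm (.pair t₁ t₂))
           (.pair (.lett (.pvar x) v.toTerm t₁) t₂)
  | pairR {x : ℕ} {v : Val} {t₁ t₂ : Term} : x ∈ t₂.fvT →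
      ELet (.lett (.pvar x) v.toTerm (.pair t₁ t₂))
           (.pair t₁ (.lett (.pvar x) v.toTerm t₂))
  | inl {x : ℕ} {v : Val} {t : Term} :
      ELet (.lett (.pvar x) v.toTerm (.inl t)) (.inl (.lett (.pvar x) v.toTerm t))
  | inr {x : ℕ} {v : Val} {t : Term} :
      ELet (.lett (.pvar x) v.toTerm (.inr t)) (.inr (.lett (.pvar x) v.toTerm t))
  | fold {x : ℕ} {v : Val} {t : Term} :
      ELet (.lett (.pvar x) v.toTerm (.fold t)) (.fold (.lett (.pvar x) v.toTerm t))
  | app {x : ℕ} {v : Val} {ω : Iso} {t : Term} :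
      ELet (.lett (.pvar x) v.toTerm (.app ω t)) (.app ω (.lett (.pvar x) v.toTerm t))

/-- The explicit-substitution reduction `→_{eβ}`. -/
inductive EBeta : Term → Term → Prop
  | elet {t t'} : ELet t t' → EBeta t t'
  | inlC {t t'} : EBeta t t' → EBeta (.inl t) (.inl t')
  | inrC {t t'} : EBeta t t' → EBeta (.inr t) (.inr t')
  | foldC {t t'} : EBeta t t' → EBeta (.fold t) (.fold t')
  | pairL {t t'} (v : Val) : EBeta t t' → EBeta (.pair t v.toTerm) (.pair t' v.toTerm)
  | pairR {t t'} (v : Val) : EBeta t t' → EBeta (.pair v.toTerm t) (.pair v.toTerm t')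
  | appC {ω t t'} : EBeta t t' → EBeta (.app ω t) (.app ω t')
  | lettC {p t₁ t₁' t₂} : EBeta t₁ t₁' → EBeta (.lett p t₁ t₂) (.lett p t₁' t₂)
  | isoRec {f ω t} :
      EBeta (.app (.fixI f ω) t) (.app (Iso.isoSub f (.fixI f ω) ω) t)
  | lettE {L : List (ℕ × Val)} {p : Pat} {v : Val} {t : Term} :
      Matches (Sub.ofList L) p.toVal v → EBeta (.lett p v.toTerm t) (letSig L t)
  | isoApp {L : List (ℕ × Val)} {l : Clauses} {vi : Val} {e : Term} {v : Val} :
      (vi, e) ∈ l.toList → Matches (Sub.ofList L) vi v →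
      EBeta (.app (.clauses l) v.toTerm) (letSig L e)

end LinRev
namespace LinRev

/-! ## Encoding of integers -/

/-- `npos = μX. 1 ⊕ X`, the type of strictly positive naturals. -/
def nposTy : Ty := .mu (.sum .one (.tvar 0))

/-- `Z = 1 ⊕ (npos ⊕ npos)`, the type of integers. -/
def ZTy : Ty := .sum .one (.sum nposTy nposTy)

/-- `enpos n` encodes the strictly positive natural `n+1 : npos`. -/
def enpos : ℕ → Val
  | 0 => .fold (.inl .unit)
  | n + 1 => .fold (.inr (enpos n))

/-- `encZ z` encodes the integer `z : Z`. -/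
def encZ (z : ℤ) : Val :=
  if 0 < z then .inr (.inl (enpos (z.natAbs - 1)))
  else if z = 0 then .inl .unit
  else .inr (.inr (enpos (z.natAbs - 1)))

/-- The successor iso on encoded integers. -/
def succIso : Iso := .clauses
  (.cons (.inl .unit) ((Val.inr (.inl (.fold (.inl .unit)))).toTerm)
  (.cons (.inr (.inl (.var 0))) ((Val.inr (.inl (.fold (.inr (.var 0))))).toTerm)
  (.cons (.inr (.inr (.fold (.inl .unit)))) ((Val.inl .unit).toTerm)
  (.cons (.inr (.inr (.fold (.inr (.var 0))))) ((Val.inr (.inr (.var 0))).toTerm)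
   .nil))))

end LinRev
namespace LinRev

/-! ## Translation of RPP into isos -/

/-- Right-nested tuple of values. -/
def tupleV : List Val → Val
  | [] => .unit
  | [v] => v
  | v :: vs => .pair v (tupleV vs)

/-- Right-nested tuple of types. -/
def tupleTy : List Ty → Ty
  | [] => .one
  | [A] => A
  | A :: As => .prod A (tupleTy As)

/-- Right-nested tuple pattern of variables. -/
def patOfVars : List ℕ → Pat
  | [] => .pvar 0
  | [x] => .pvar x
  | x :: xs => .ppair (.pvar x) (patOfVars xs)

/-- `Z^k`. -/
def Zpow (k : ℕ) : Ty := tupleTy (List.replicate k ZTy)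

/-- Tuple of variables `s, …, s+c-1`. -/
def vt (s c : ℕ) : Val := tupleV ((List.range' s c).map .var)

def pt' (s c : ℕ) : Pat := patOfVars (List.range' s c)

def idIso : Iso := .clauses (.cons (.var 0) (Term.var 0) .nil)

def swapIso : Iso :=
  .clauses (.cons (.pair (.var 0) (.var 1)) ((Val.pair (.var 1) (.var 0)).toTerm) .nil)

def signIso : Iso := .clauses
  (.cons (.inr (.inl (.var 0))) ((Val.inr (.inr (.var 0))).toTerm)
  (.cons (.inr (.inr (.var 0))) ((Val.inr (.inl (.var 0))).toTerm)
  (.cons (.inl .unit) ((Val.inl .unit).toTerm) .nil)))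

/-- Encoding of sequential composition `f ; g` at arity `n`. -/
def compIso (n : ℕ) (wf wg : Iso) : Iso :=
  .clauses (.cons (vt 0 n)
    (.lett (pt' n n) (.app wf (vt 0 n).toTerm)
      (.lett (pt' (2 * n) n) (.app wg (vt n n).toTerm)
        (vt (2 * n) n).toTerm)) .nil)

/-- Encoding of parallel composition `f ∥ g` at arities `j` and `l`. -/
def parIso (j l : ℕ) (wf wg : Iso) : Iso :=
  .clauses (.cons (vt 0 (j + l))
    (.lett (patOfVars (List.range' (j + l) j)) (.app wf (vt 0 j).toTerm)
      (.lett (patOfVars (List.range' (2 * j + l) l)) (.app wg (vt j l).toTerm)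
        (tupleV (((List.range' (j + l) j ++ List.range' (2 * j + l) l)).map .var)).toTerm))
    .nil)

/-- The auxiliary, structurally recursive iterating iso
`ω_aux : Z^k ⊗ npos ↔ Z^k ⊗ npos`. -/
def auxIt (k : ℕ) (wf : Iso) : Iso :=
  .fixI 0 (.clauses
    (.cons (tupleV (((List.range' 0 k).map Val.var) ++ [.fold (.inl .unit)]))
      (.lett (pt' k k) (.app wf (vt 0 k).toTerm)
        (tupleV (((List.range' k k).map Val.var) ++ [Val.fold (.inl .unit)])).toTerm)
    (.cons (tupleV (((List.range' 0 k).map Val.var) ++ [.fold (.inr (.var k))]))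
      (.lett (pt' (k + 1) k) (.app wf (vt 0 k).toTerm)
        (.lett (patOfVars (List.range' (2 * k + 1) k ++ [3 * k + 1]))
          (.app (.ivar 0)
            (tupleV (((List.range' (k + 1) k).map Val.var) ++ [Val.var k])).toTerm)
          (tupleV (((List.range' (2 * k + 1) k).map Val.var)
              ++ [Val.fold (.inr (.var (3 * k + 1)))])).toTerm))
      .nil)))

/-- Encoding of the finite iteration `It[f]`. -/
def itIso (k : ℕ) (wf : Iso) : Iso :=
  .clauses
    (.cons (tupleV (((List.range' 0 k).map Val.var) ++ [.inl .unit]))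
      (tupleV (((List.range' 0 k).map Val.var) ++ [Val.inl .unit])).toTerm
    (.cons (tupleV (((List.range' 0 k).map Val.var) ++ [.inr (.inl (.var k))]))
      (.lett (patOfVars (List.range' (k + 1) k ++ [2 * k + 1]))
        (.app (auxIt k wf) (tupleV (((List.range' 0 k).map Val.var) ++ [Val.var k])).toTerm)
        (tupleV (((List.range' (k + 1) k).map Val.var)
            ++ [Val.inr (.inl (.var (2 * k + 1)))])).toTerm)
    (.cons (tupleV (((List.range' 0 k).map Val.var) ++ [.inr (.inr (.var k))]))
      (.lett (patOfVars (List.range' (k + 1) k ++ [2 * k + 1]))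
        (.app (auxIt k wf) (tupleV (((List.range' 0 k).map Val.var) ++ [Val.var k])).toTerm)
        (tupleV (((List.range' (k + 1) k).map Val.var)
            ++ [Val.inr (.inr (.var (2 * k + 1)))])).toTerm)
      .nil)))

/-- Encoding of the selection `If[f,g,h]`. -/
def ifIso (k : ℕ) (wf wg wh : Iso) : Iso :=
  .clauses
    (.cons (tupleV (((List.range' 0 k).map Val.var) ++ [.inr (.inl (.var k))]))
      (.lett (pt' (k + 1) k) (.app wf (vt 0 k).toTerm)
        (tupleV (((List.range' (k + 1) k).map Val.var)
            ++ [Val.inr (.inl (.var k))])).toTerm)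
    (.cons (tupleV (((List.range' 0 k).map Val.var) ++ [.inl .unit]))
      (.lett (pt' (k + 1) k) (.app wg (vt 0 k).toTerm)
        (tupleV (((List.range' (k + 1) k).map Val.var) ++ [Val.inl .unit])).toTerm)
    (.cons (tupleV (((List.range' 0 k).map Val.var) ++ [.inr (.inr (.var k))]))
      (.lett (pt' (k + 1) k) (.app wh (vt 0 k).toTerm)
        (tupleV (((List.range' (k + 1) k).map Val.var)
            ++ [Val.inr (.inr (.var k))])).toTerm)
      .nil)))

/-- The translation `isos(·)` from RPP to isos of the reversible language. -/
def isosOf : ∀ {k : ℕ}, RPPx.RPP k → Iso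
  | _, .id => idIso
  | _, .suc => succIso
  | _, .pre => succIso.inv
  | _, .sign => signIso
  | _, .swap => swapIso
  | k, .comp f g => compIso k (isosOf f) (isosOf g)
  | _, @RPPx.RPP.par j l f g => parIso j l (isosOf f) (isosOf g)
  | _, @RPPx.RPP.it k f => itIso k (isosOf f)
  | _, @RPPx.RPP.ite k f g h => ifIso k (isosOf f) (isosOf g) (isosOf h)

/-- Encoding of a tuple of integers. -/
def encTup {k : ℕ} (v : Fin k → ℤ) : Val :=
  tupleV (List.ofFn fun i => encZ (v i))

end LinRev

namespace LinRev

/-! ### Substitution and clause evaluation -/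

/-- The value `v` with every variable `x` replaced by `env x`. -/
def Val.inst (env : ℕ → Val) (v : Val) : Val := v.applySub fun x => some (env x)

/-- The finite substitution that agrees with `env` on `S` and is undefined elsewhere. -/
def res (env : ℕ → Val) (S : Finset ℕ) : Sub := fun x => if x ∈ S then some (env x) else none

/-- `env` takes only closed values. -/
def ClosedEnv (env : ℕ → Val) : Prop := ∀ x, (env x).fv = ∅

/-- No variable occurs twice in the value. -/
def Val.Linear : Val → Prop
  | .unit => True
  | .var _ => True
  | .inl v => v.Linear
  | .inr v => v.Linear
  | .fold v => v.Linear
  | .pair v w => v.Linear ∧ w.Linear ∧ Disjoint v.fv w.fv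

theorem matches_res (env : ℕ → Val) : ∀ p : Val, p.Linear → Matches (res env p.fv) p (p.inst env)
  | .unit, _ => by
      have h : res env (Val.unit).fv = fun _ => none := by funext x; simp [res, Val.fv]
      rw [h]; exact .unit
  | .var x, _ => by
      have h : res env (Val.var x).fv = fun y => if y = x then some (env x) else none := by
        funext y
        by_cases hy : y = x <;> simp [res, Val.fv, hy]
      rw [h]; exact .var x _
  | .inl v, h => .inl (matches_res env v h)
  | .inr v, h => .inr (matches_res env v h)
  | .fold v, h => .fold (matches_res env v h)
  | .pair v w, ⟨hv, hw, hd⟩ => by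
      have h : res env (Val.pair v w).fv = (res env v.fv).union (res env w.fv) := by
        funext x
        by_cases hx : x ∈ v.fv <;> simp [res, Val.fv, Sub.union, hx]
      rw [h]
      refine .pair (matches_res env v hv) (matches_res env w hw) fun x => ?_
      by_cases hx : x ∈ v.fv
      · right; simp [res, Finset.disjoint_left.1 hd hx]
      · left; simp [res, hx]

theorem Val.applySub_closed (σ : Sub) : ∀ v : Val, v.fv = ∅ → v.applySub σ = v
  | .unit, _ => rfl
  | .var x, h => by simp [Val.fv] at h
  | .inl v, h => congrArg Val.inl (applySub_closed σ v h)
  | .inr v, h => congrArg Val.inr (applySub_closed σ v h)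
  | .fold v, h => congrArg Val.fold (applySub_closed σ v h)
  | .pair v w, h => by
      simp only [Val.fv, Finset.union_eq_empty] at h
      simp [Val.applySub, applySub_closed σ v h.1, applySub_closed σ w h.2]

theorem Val.applySub_res (env : ℕ → Val) (S : Finset ℕ) :
    ∀ v : Val, v.fv ⊆ S → v.applySub (res env S) = v.inst env
  | .unit, _ => rfl
  | .var x, h => by
      have : x ∈ S := h (by simp [Val.fv])
      simp [Val.inst, Val.applySub, res, this]
  | .inl v, h => congrArg Val.inl (applySub_res env S v h)
  | .inr v, h => congrArg Val.inr (applySub_res env S v h)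
  | .fold v, h => congrArg Val.fold (applySub_res env S v h)
  | .pair v w, h => by
      have hv := applySub_res env S v (Finset.union_subset_left h)
      have hw := applySub_res env S w (Finset.union_subset_right h)
      simp only [Val.inst] at hv hw ⊢
      simp [Val.applySub, hv, hw]

theorem Val.toTerm_applySub (σ : Sub) : ∀ v : Val, v.toTerm.applySub σ = (v.applySub σ).toTerm
  | .unit => rfl
  | .var x => by
      simp only [Val.toTerm, Term.applySub, Val.applySub]
      cases σ x <;> rfl
  | .inl v => congrArg Term.inl (toTerm_applySub σ v)
  | .inr v => congrArg Term.inr (toTerm_applySub σ v)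
  | .fold v => congrArg Term.fold (toTerm_applySub σ v)
  | .pair v w => by
      simp [Val.toTerm, Term.applySub, Val.applySub, toTerm_applySub σ v, toTerm_applySub σ w]

/-- Two successive restrictions of one closed environment act as a single one. Since every clause
uses pairwise distinct names, a whole run of a clause body is thereby governed by one
environment. -/
theorem Term.applySub_applySub {env : ℕ → Val} (hc : ClosedEnv env) (S T : Finset ℕ) :
    ∀ t : Term, (t.applySub (res env S)).applySub (res env T) = t.applySub (res env (S ∪ T))
  | .unit => rfl
  | .var x => by
      by_cases hS : x ∈ S
      · simp [Term.applySub, res, hS, Val.toTerm_applySub, Val.applySub_closed _ _ (hc x)]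
      · by_cases hT : x ∈ T <;> simp [Term.applySub, res, hS, hT]
  | .inl v => congrArg Term.inl (applySub_applySub hc S T v)
  | .inr v => congrArg Term.inr (applySub_applySub hc S T v)
  | .fold v => congrArg Term.fold (applySub_applySub hc S T v)
  | .pair v w => by
      simp [Term.applySub, applySub_applySub hc S T v, applySub_applySub hc S T w]
  | .app ω v => by
      simp [Term.applySub, applySub_applySub hc S T v]
  | .lett p v w => by
      simp [Term.applySub, applySub_applySub hc S T v, applySub_applySub hc S T w]

theorem Steps.lettC {p t₁ t₁' t₂} (h : Steps t₁ t₁') : Steps (.lett p t₁ t₂) (.lett p t₁' t₂) :=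
  Relation.ReflTransGen.lift (fun t => Term.lett p t t₂) (fun _ _ h => Step.lettC h) _ _ h

/-- One `let` of a clause body: once its iso call is known to send the instance of `V` to the
instance of the pattern `p`, the variables of `p` join the instantiated ones. -/
theorem let_steps {env : ℕ → Val} (hc : ClosedEnv env) {S : Finset ℕ} {w : Iso} {V : Val} {p : Pat}
    {t : Term} {r : Term} (hp : p.toVal.Linear) (hV : V.fv ⊆ S)
    (hw : Steps (.app w (V.inst env).toTerm) ((p.toVal.inst env).toTerm))
    (ht : Steps (t.applySub (res env (S ∪ p.toVal.fv))) r) :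
    Steps ((Term.lett p (.app w V.toTerm) t).applySub (res env S)) r := by
  have e : (Term.lett p (.app w V.toTerm) t).applySub (res env S)
      = .lett p (.app w (V.inst env).toTerm) (t.applySub (res env S)) := by
    simp [Term.applySub, Val.toTerm_applySub, Val.applySub_res env S V hV]
  rw [e]
  refine (Steps.lettC hw).trans (Relation.ReflTransGen.head (Step.lettE (matches_res env _ hp)) ?_)
  rwa [Term.applySub_applySub hc]

theorem value_steps {env : ℕ → Val} {S : Finset ℕ} {V : Val} {r : Term} (hV : V.fv ⊆ S)
    (h : (V.inst env).toTerm = r) :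
    Steps (V.toTerm.applySub (res env S)) r := by
  rw [Val.toTerm_applySub, Val.applySub_res env S V hV, h]
  exact .refl

theorem clause_steps {env : ℕ → Val} {l : Clauses} {p : Val} {e r : Term}
    (hm : (p, e) ∈ l.toList) (hp : p.Linear) (h : Steps (e.applySub (res env p.fv)) r) :
    Steps (.app (.clauses l) (p.inst env).toTerm) r :=
  Relation.ReflTransGen.head (Step.isoApp hm (matches_res env p hp)) h

/-! ### Tuples of variables and of encoded integers -/

theorem tupleV_cons (v : Val) {L : List Val} (h : L ≠ []) : tupleV (v :: L) = .pair v (tupleV L) := by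
  cases L with
  | nil => exact absurd rfl h
  | cons a l => rfl

theorem patOfVars_toVal : ∀ xs : List ℕ, xs ≠ [] → (patOfVars xs).toVal = tupleV (xs.map .var)
  | [], h => absurd rfl h
  | [x], _ => rfl
  | x :: y :: l, _ => by
      simpa [patOfVars, Pat.toVal, tupleV] using patOfVars_toVal (y :: l) (by simp)

theorem tupleV_inst (env : ℕ → Val) : ∀ L : List Val,
    (tupleV L).inst env = tupleV (L.map (Val.inst env))
  | [] => rfl
  | [x] => rfl
  | x :: y :: l => by
      have := tupleV_inst env (y :: l)
      simp only [Val.inst, List.map_cons] at this ⊢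
      simp [tupleV, Val.applySub, this]

theorem mem_tupleV_fv (x : ℕ) : ∀ L : List Val, x ∈ (tupleV L).fv ↔ ∃ v ∈ L, x ∈ v.fv
  | [] => by simp [tupleV, Val.fv]
  | [v] => by simp [tupleV]
  | v :: y :: l => by
      have := mem_tupleV_fv x (y :: l)
      simp only [tupleV, Val.fv, Finset.mem_union, this]
      simp

theorem tupleV_linear : ∀ L : List Val, (∀ v ∈ L, v.Linear) →
    L.Pairwise (fun v w => Disjoint v.fv w.fv) → (tupleV L).Linear
  | [], _, _ => trivial
  | [v], h, _ => h v (by simp)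
  | v :: y :: l, h, hp => by
      rw [List.pairwise_cons] at hp
      refine ⟨h v (by simp), tupleV_linear (y :: l) (fun w hw => h w (by simp [hw])) hp.2, ?_⟩
      rw [Finset.disjoint_left]
      intro x hx hx'
      obtain ⟨w, hw, hxw⟩ := (mem_tupleV_fv x _).1 hx'
      exact Finset.disjoint_left.1 (hp.1 w hw) hx hxw

/-- The tuple of the variables `s, …, s+c-1` followed by the value `q`. -/
def vtq (s c : ℕ) (q : Val) : Val := tupleV ((List.range' s c).map .var ++ [q])

theorem mem_vt_fv {x s c : ℕ} : x ∈ (vt s c).fv ↔ s ≤ x ∧ x < s + c := by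
  simp [vt, mem_tupleV_fv, Val.fv, List.mem_range'_1]

theorem mem_vtq_fv {x s c : ℕ} {q : Val} :
    x ∈ (vtq s c q).fv ↔ (s ≤ x ∧ x < s + c) ∨ x ∈ q.fv := by
  simp [vtq, mem_tupleV_fv, or_and_right, exists_or, Val.fv, List.mem_range'_1]

theorem vtq_var (s c : ℕ) : vtq s c (.var (s + c)) = vt s (c + 1) := by
  simp [vtq, vt, List.range'_concat]

theorem pairwise_vars (s c : ℕ) :
    ((List.range' s c).map Val.var).Pairwise (fun v w => Disjoint v.fv w.fv) := by
  rw [List.pairwise_map]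
  refine (List.nodup_range' (s := s) (n := c)).imp ?_
  intro a b h
  simpa [Val.fv] using h

theorem vt_linear (s c : ℕ) : (vt s c).Linear :=
  tupleV_linear _ (by rintro _ hv; obtain ⟨x, -, rfl⟩ := List.mem_map.1 hv; trivial) (pairwise_vars s c)

theorem vtq_linear {s c : ℕ} {q : Val} (hq : q.Linear) (h : ∀ x ∈ q.fv, x < s ∨ s + c ≤ x) :
    (vtq s c q).Linear := by
  refine tupleV_linear _ ?_ ?_
  · intro v hv
    simp only [List.mem_append, List.mem_map, List.mem_singleton] at hv
    rcases hv with ⟨x, _, rfl⟩ | rfl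
    · trivial
    · exact hq
  · rw [List.pairwise_append]
    refine ⟨pairwise_vars s c, by simp, ?_⟩
    simp only [List.mem_map, List.mem_singleton, List.mem_range'_1]
    rintro _ ⟨x, hx, rfl⟩ _ rfl
    rw [Finset.disjoint_left]
    intro y hy hy'
    simp only [Val.fv, Finset.mem_singleton] at hy
    have := h y hy'
    omega

theorem pt'_toVal (s : ℕ) {c : ℕ} (hc : 0 < c) : (pt' s c).toVal = vt s c :=
  patOfVars_toVal _ (by simp; omega)

theorem patOfVars_snoc_toVal (s c x : ℕ) :
    (patOfVars (List.range' s c ++ [x])).toVal = vtq s c (.var x) := by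
  rw [patOfVars_toVal _ (by simp)]
  simp [vtq]

theorem enpos_fv : ∀ n, (enpos n).fv = ∅
  | 0 => rfl
  | n + 1 => enpos_fv n

theorem encZ_fv (z : ℤ) : (encZ z).fv = ∅ := by
  unfold encZ
  split_ifs <;> simp [Val.fv, enpos_fv]

/-- The encodings of the entries of `v`, followed by the value `u`. -/
def encq {k : ℕ} (v : Fin k → ℤ) (u : Val) : Val := tupleV ((List.ofFn fun i => encZ (v i)) ++ [u])

theorem encTup_snoc {k : ℕ} (v : Fin k → ℤ) (z : ℤ) :
    encTup (Fin.snoc v z : Fin (k + 1) → ℤ) = encq v (encZ z) := by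
  rw [encTup, List.ofFn_succ', List.concat_eq_append]
  simp [encq]

theorem map_vars_inst {env : ℕ → Val} {s k : ℕ} {v : Fin k → ℤ}
    (h : ∀ i : Fin k, env (s + i) = encZ (v i)) :
    ((List.range' s k).map Val.var).map (Val.inst env) = List.ofFn fun i => encZ (v i) := by
  apply List.ext_getElem
  · simp
  · intro i h₁ h₂
    simp at h₁
    simpa [Val.inst, Val.applySub] using h ⟨i, h₁⟩

theorem vt_inst {env : ℕ → Val} {s k : ℕ} {v : Fin k → ℤ}
    (h : ∀ i : Fin k, env (s + i) = encZ (v i)) : (vt s k).inst env = encTup v := by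
  rw [vt, tupleV_inst, map_vars_inst h, encTup]

theorem vtq_inst {env : ℕ → Val} {s k : ℕ} {v : Fin k → ℤ} {q u : Val}
    (h : ∀ i : Fin k, env (s + i) = encZ (v i)) (hq : q.inst env = u) :
    (vtq s k q).inst env = encq v u := by
  rw [vtq, tupleV_inst, List.map_append, map_vars_inst h, encq, ← hq]
  rfl

end LinRev

namespace LinRev

/-! ### Operational correctness of the translation -/

theorem RPP_pos {k : ℕ} (f : RPPx.RPP k) : 0 < k := by
  induction f <;> omega

/-- The iso inverse to the successor, in explicit form. -/
theorem succIso_inv : succIso.inv = .clauses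
    (.cons (.inr (.inl (.fold (.inl .unit)))) ((Val.inl .unit).toTerm)
    (.cons (.inr (.inl (.fold (.inr (.var 0))))) ((Val.inr (.inl (.var 0))).toTerm)
    (.cons (.inl .unit) ((Val.inr (.inr (.fold (.inl .unit)))).toTerm)
    (.cons (.inr (.inr (.var 0))) ((Val.inr (.inr (.fold (.inr (.var 0))))).toTerm)
     .nil)))) := by
  simp [succIso, Iso.inv, Clauses.inv, invAux, Val.toTerm, Term.asVal]

theorem toTerm_isoSub (f : ℕ) (w : Iso) : ∀ v : Val, Term.isoSub f w v.toTerm = v.toTerm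
  | .unit => by simp [Val.toTerm, Term.isoSub]
  | .var x => by simp [Val.toTerm, Term.isoSub]
  | .inl v => by simp [Val.toTerm, Term.isoSub, toTerm_isoSub f w v]
  | .inr v => by simp [Val.toTerm, Term.isoSub, toTerm_isoSub f w v]
  | .fold v => by simp [Val.toTerm, Term.isoSub, toTerm_isoSub f w v]
  | .pair u v => by simp [Val.toTerm, Term.isoSub, toTerm_isoSub f w u, toTerm_isoSub f w v]

/-- The translation of an RPP function has no free occurrence of the iso variable `0`, the only one
that the translation ever binds. -/
theorem isosOf_isoSub (w : Iso) {k : ℕ} (f : RPPx.RPP k) : Iso.isoSub 0 w (isosOf f) = isosOf f := by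
  induction f with
  | id => simp [isosOf, idIso, Iso.isoSub, Clauses.isoSub, Term.isoSub]
  | suc => simp [isosOf, succIso, Iso.isoSub, Clauses.isoSub, toTerm_isoSub]
  | pre => simp [isosOf, succIso_inv, Iso.isoSub, Clauses.isoSub, toTerm_isoSub]
  | sign => simp [isosOf, signIso, Iso.isoSub, Clauses.isoSub, toTerm_isoSub]
  | swap => simp [isosOf, swapIso, Iso.isoSub, Clauses.isoSub, toTerm_isoSub]
  | comp f g hf hg =>
    simp [isosOf, compIso, Iso.isoSub, Clauses.isoSub, Term.isoSub, toTerm_isoSub, hf, hg]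
  | par f g hf hg =>
    simp [isosOf, parIso, Iso.isoSub, Clauses.isoSub, Term.isoSub, toTerm_isoSub, hf, hg]
  | it f hf =>
    simp [isosOf, itIso, auxIt, Iso.isoSub, Clauses.isoSub, Term.isoSub, toTerm_isoSub]
  | ite f g h hf hg hh =>
    simp [isosOf, ifIso, Iso.isoSub, Clauses.isoSub, Term.isoSub, toTerm_isoSub, hf, hg, hh]

/-- The extension by zero of a vector to all indices. -/
def ext {k : ℕ} (v : Fin k → ℤ) (x : ℕ) : ℤ := if h : x < k then v ⟨x, h⟩ else 0

@[simp] theorem ext_val {k : ℕ} (v : Fin k → ℤ) (i : Fin k) : ext v i = v i := by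
  simp [ext]

theorem encZ_pos {z : ℤ} (h : 0 < z) : encZ z = .inr (.inl (enpos (z.natAbs - 1))) := by
  simp [encZ, h]

theorem encZ_zero : encZ 0 = .inl .unit := by
  simp [encZ]

theorem encZ_neg {z : ℤ} (h : z < 0) : encZ z = .inr (.inr (enpos (z.natAbs - 1))) := by
  have h₁ : ¬ 0 < z := by omega
  have h₂ : z ≠ 0 := by omega
  simp [encZ, h₁, h₂]

theorem enpos_pred {n : ℕ} (h : 0 < n) : enpos n = .fold (.inr (enpos (n - 1))) := by
  obtain ⟨m, rfl⟩ : ∃ m, n = m + 1 := ⟨n - 1, by omega⟩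
  rfl

/-- `Sim w F`: the iso `w` computes `F` on encoded vectors of integers. -/
def Sim (w : Iso) {k : ℕ} (F : (Fin k → ℤ) → (Fin k → ℤ)) : Prop :=
  ∀ v, Steps (.app w (encTup v).toTerm) ((encTup (F v)).toTerm)

/-- Simulation for one wire, in terms of the single encoded integer. -/
theorem Sim.of_one {w : Iso} {F : (Fin 1 → ℤ) → (Fin 1 → ℤ)} (G : ℤ → ℤ) (hF : ∀ v, F v 0 = G (v 0))
    (h : ∀ z, Steps (.app w (encZ z).toTerm) ((encZ (G z)).toTerm)) : Sim w F := by
  intro v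
  have := h (v 0)
  rw [← hF] at this
  simpa [encTup, tupleV] using this

/-- A clause whose right-hand side is a value. -/
theorem value_clause_steps (env : ℕ → Val) {l : Clauses} {p e u r : Val}
    (hm : (p, e.toTerm) ∈ l.toList) (hp : p.Linear) (hfv : e.fv ⊆ p.fv) (hu : p.inst env = u)
    (hr : e.inst env = r) : Steps (.app (.clauses l) u.toTerm) r.toTerm := by
  subst hu
  exact clause_steps hm hp (value_steps hfv (by rw [hr]))

theorem sim_suc (z : ℤ) : Steps (.app succIso (encZ z).toTerm) ((encZ (z + 1)).toTerm) := by
  rcases lt_trichotomy z 0 with h | rfl | h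
  · rcases eq_or_lt_of_le (show z ≤ -1 by omega) with rfl | h'
    · refine value_clause_steps (fun _ => .unit) (p := .inr (.inr (.fold (.inl .unit))))
        (e := .inl .unit) ?_ ?_ ?_ ?_ ?_ <;>
      simp [Clauses.toList, Val.Linear, Val.fv, Val.inst, Val.applySub, encZ, enpos]
    · rw [encZ_neg h, encZ_neg (by omega), enpos_pred (by omega)]
      refine value_clause_steps (fun _ => enpos (z.natAbs - 1 - 1))
        (p := .inr (.inr (.fold (.inr (.var 0)))))
        (e := .inr (.inr (.var 0))) ?_ ?_ ?_ ?_ ?_ <;>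
      simp [Clauses.toList, Val.Linear, Val.fv, Val.inst, Val.applySub]
      congr 1; omega
  · refine value_clause_steps (fun _ => .unit) (p := .inl .unit)
        (e := .inr (.inl (.fold (.inl .unit)))) ?_ ?_ ?_ ?_ ?_ <;>
      simp [Clauses.toList, Val.Linear, Val.fv, Val.inst, Val.applySub, encZ, enpos]
  · rw [encZ_pos h, encZ_pos (by omega), enpos_pred (show 0 < (z + 1).natAbs - 1 by omega)]
    refine value_clause_steps (fun _ => enpos (z.natAbs - 1))
        (p := .inr (.inl (.var 0)))
        (e := .inr (.inl (.fold (.inr (.var 0))))) ?_ ?_ ?_ ?_ ?_ <;>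
      simp [Clauses.toList, Val.Linear, Val.fv, Val.inst, Val.applySub]
    congr 1; omega

theorem sim_pre (z : ℤ) : Steps (.app succIso.inv (encZ z).toTerm) ((encZ (z - 1)).toTerm) := by
  rw [succIso_inv]
  rcases lt_trichotomy z 0 with h | rfl | h
  · rw [encZ_neg h, encZ_neg (by omega), enpos_pred (show 0 < (z - 1).natAbs - 1 by omega)]
    refine value_clause_steps (fun _ => enpos (z.natAbs - 1))
        (p := .inr (.inr (.var 0)))
        (e := .inr (.inr (.fold (.inr (.var 0))))) ?_ ?_ ?_ ?_ ?_ <;>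
      simp [Clauses.toList, Val.Linear, Val.fv, Val.inst, Val.applySub]
    congr 1; omega
  · refine value_clause_steps (fun _ => .unit) (p := .inl .unit)
        (e := .inr (.inr (.fold (.inl .unit)))) ?_ ?_ ?_ ?_ ?_ <;>
      simp [Clauses.toList, Val.Linear, Val.fv, Val.inst, Val.applySub, encZ, enpos]
  · rcases eq_or_lt_of_le (show 1 ≤ z by omega) with rfl | h'
    · refine value_clause_steps (fun _ => .unit) (p := .inr (.inl (.fold (.inl .unit))))
        (e := .inl .unit) ?_ ?_ ?_ ?_ ?_ <;>
      simp [Clauses.toList, Val.Linear, Val.fv, Val.inst, Val.applySub, encZ, enpos]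
    · rw [encZ_pos h, encZ_pos (by omega), enpos_pred (by omega)]
      refine value_clause_steps (fun _ => enpos (z.natAbs - 1 - 1))
        (p := .inr (.inl (.fold (.inr (.var 0)))))
        (e := .inr (.inl (.var 0))) ?_ ?_ ?_ ?_ ?_ <;>
      simp [Clauses.toList, Val.Linear, Val.fv, Val.inst, Val.applySub]
      congr 1; omega

theorem sim_sign (z : ℤ) : Steps (.app signIso (encZ z).toTerm) ((encZ (-z)).toTerm) := by
  rcases lt_trichotomy z 0 with h | rfl | h
  · rw [encZ_neg h, encZ_pos (by omega)]
    refine value_clause_steps (fun _ => enpos (z.natAbs - 1))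
        (p := .inr (.inr (.var 0))) (e := .inr (.inl (.var 0))) ?_ ?_ ?_ ?_ ?_ <;>
      simp [Clauses.toList, Val.Linear, Val.fv, Val.inst, Val.applySub]
  · refine value_clause_steps (fun _ => .unit) (p := .inl .unit)
        (e := .inl .unit) ?_ ?_ ?_ ?_ ?_ <;>
      simp [Clauses.toList, Val.Linear, Val.fv, Val.inst, Val.applySub, encZ]
  · rw [encZ_pos h, encZ_neg (by omega)]
    refine value_clause_steps (fun _ => enpos (z.natAbs - 1))
        (p := .inr (.inl (.var 0))) (e := .inr (.inr (.var 0))) ?_ ?_ ?_ ?_ ?_ <;>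
      simp [Clauses.toList, Val.Linear, Val.fv, Val.inst, Val.applySub]

theorem sim_id (z : ℤ) : Steps (.app idIso (encZ z).toTerm) ((encZ z).toTerm) := by
  refine value_clause_steps (fun _ => encZ z) (p := .var 0) (e := .var 0) ?_ ?_ ?_ ?_ ?_ <;>
    simp [Clauses.toList, Val.Linear, Val.inst, Val.applySub, Val.toTerm]

theorem sim_swap : Sim swapIso (RPPx.eval .swap) := by
  intro v
  refine value_clause_steps (fun x => encZ (ext v x)) (p := .pair (.var 0) (.var 1))
    (e := .pair (.var 1) (.var 0)) ?_ ?_ ?_ ?_ ?_ <;>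
    simp [Clauses.toList, Val.Linear, Val.fv, Val.inst, Val.applySub, encTup, tupleV, ext,
      RPPx.eval, Finset.pair_comm]

theorem sim_comp {n : ℕ} (hn : 0 < n) {wf wg : Iso} {F G : (Fin n → ℤ) → (Fin n → ℤ)}
    (hf : Sim wf F) (hg : Sim wg G) : Sim (compIso n wf wg) (fun v => G (F v)) := by
  intro v
  let env : ℕ → Val := fun x => encZ (if x < n then ext v x else
    if x < 2 * n then ext (F v) (x - n) else ext (G (F v)) (x - 2 * n))
  have hc : ClosedEnv env := fun x => encZ_fv _
  have h₀ : (vt 0 n).inst env = encTup v := vt_inst fun i => by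
    simp [env]
  have h₁ : (vt n n).inst env = encTup (F v) := vt_inst fun i => by
    have h : n + (i : ℕ) < 2 * n := by omega
    simp [env, h]
  have h₂ : (vt (2 * n) n).inst env = encTup (G (F v)) := vt_inst fun i => by
    have h : ¬ 2 * n + (i : ℕ) < n := by omega
    simp [env, h]
  rw [← h₀]
  refine clause_steps (by simp [Clauses.toList]; rfl) (vt_linear _ _) ?_
  refine let_steps hc (by rw [pt'_toVal _ hn]; exact vt_linear _ _) (fun x hx => hx) ?_ ?_
  · rw [pt'_toVal _ hn, h₀, h₁]; exact hf v
  refine let_steps hc (by rw [pt'_toVal _ hn]; exact vt_linear _ _) ?_ ?_ ?_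
  · rw [pt'_toVal _ hn]; exact fun x hx => Finset.mem_union_right _ hx
  · rw [pt'_toVal _ hn, h₁, h₂]; exact hg _
  refine value_steps ?_ (by rw [h₂])
  rw [pt'_toVal (2 * n) hn]; exact fun x hx => Finset.mem_union_right _ hx

theorem parIso_eq (j l : ℕ) (wf wg : Iso) : parIso j l wf wg =
    .clauses (.cons (vt 0 (j + l))
      (.lett (pt' (j + l) j) (.app wf (vt 0 j).toTerm)
        (.lett (pt' (2 * j + l) l) (.app wg (vt j l).toTerm)
          (vt (j + l) (j + l)).toTerm)) .nil) := by
  have h : List.range' (j + l) j ++ List.range' (2 * j + l) l = List.range' (j + l) (j + l) := by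
    rw [show 2 * j + l = (j + l) + j by omega, List.range'_append_1]
  simp only [parIso, h]
  rfl

theorem sim_par {j l : ℕ} (hj : 0 < j) (hl : 0 < l) {wf wg : Iso} {F : (Fin j → ℤ) → (Fin j → ℤ)}
    {G : (Fin l → ℤ) → (Fin l → ℤ)} (hf : Sim wf F) (hg : Sim wg G) :
    Sim (parIso j l wf wg)
      (fun v => Fin.append (F (v ∘ Fin.castAdd l)) (G (v ∘ Fin.natAdd j))) := by
  intro v
  set a := v ∘ Fin.castAdd l with ha
  set b := v ∘ Fin.natAdd j with hb
  let env : ℕ → Val := fun x => encZ (if x < j + l then ext v x else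
    ext (Fin.append (F a) (G b)) (x - (j + l)))
  have hc : ClosedEnv env := fun x => encZ_fv _
  have h₀ : (vt 0 (j + l)).inst env = encTup v := vt_inst fun i => by
    simp [env]
  have ha₀ : (vt 0 j).inst env = encTup a := vt_inst fun i => by
    have h : (i : ℕ) < j + l := by omega
    simp [env, ha, h, ext, Fin.castAdd, Fin.castLE]
  have hb₀ : (vt j l).inst env = encTup b := vt_inst fun i => by
    simp [env, hb, ext, Fin.natAdd]
  have h₁ : (vt (j + l) (j + l)).inst env = encTup (Fin.append (F a) (G b)) := vt_inst fun i => by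
    simp [env]
  have ha₁ : (vt (j + l) j).inst env = encTup (F a) := vt_inst fun i => by
    have := ext_val (Fin.append (F a) (G b)) (Fin.castAdd l i)
    simp only [Fin.val_castAdd, Fin.append_left] at this
    simp [env, this]
  have hb₁ : (vt (2 * j + l) l).inst env = encTup (G b) := vt_inst fun i => by
    have := ext_val (Fin.append (F a) (G b)) (Fin.natAdd j i)
    simp only [Fin.val_natAdd, Fin.append_right] at this
    have h : ¬ 2 * j + l + (i : ℕ) < j + l := by omega
    have h' : 2 * j + l + (i : ℕ) - (j + l) = j + i := by omega
    simp [env, h, h', this]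
  rw [parIso_eq, ← h₀]
  refine clause_steps (by simp [Clauses.toList]; rfl) (vt_linear _ _) ?_
  refine let_steps hc (by rw [pt'_toVal _ hj]; exact vt_linear _ _) ?_ ?_ ?_
  · intro x; simp only [mem_vt_fv]; omega
  · rw [pt'_toVal _ hj, ha₀, ha₁]; exact hf a
  refine let_steps hc (by rw [pt'_toVal _ hl]; exact vt_linear _ _) ?_ ?_ ?_
  · intro x; simp only [mem_vt_fv, Finset.mem_union]; omega
  · rw [pt'_toVal _ hl, hb₀, hb₁]; exact hg _
  refine value_steps ?_ (by rw [h₁])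
  rw [pt'_toVal _ hj, pt'_toVal _ hl]
  intro x; simp only [mem_vt_fv, Finset.mem_union]; omega

end LinRev

namespace LinRev

/-! ### Selection and iteration -/

/-- The three clauses of `ifIso`, with the tuples written as `vtq`. -/
theorem ifIso_eq (k : ℕ) (wf wg wh : Iso) : ifIso k wf wg wh = .clauses
    (.cons (vtq 0 k (.inr (.inl (.var k))))
      (.lett (pt' (k + 1) k) (.app wf (vt 0 k).toTerm)
        (vtq (k + 1) k (.inr (.inl (.var k)))).toTerm)
    (.cons (vtq 0 k (.inl .unit))
      (.lett (pt' (k + 1) k) (.app wg (vt 0 k).toTerm) (vtq (k + 1) k (.inl .unit)).toTerm)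
    (.cons (vtq 0 k (.inr (.inr (.var k))))
      (.lett (pt' (k + 1) k) (.app wh (vt 0 k).toTerm)
        (vtq (k + 1) k (.inr (.inr (.var k)))).toTerm)
      .nil))) := rfl

/-- The clauses of `auxIt`, with the iso `r` called recursively left open. -/
def auxBody (k : ℕ) (wf r : Iso) : Clauses :=
  .cons (vtq 0 k (.fold (.inl .unit)))
    (.lett (pt' k k) (.app wf (vt 0 k).toTerm) (vtq k k (.fold (.inl .unit))).toTerm)
  (.cons (vtq 0 k (.fold (.inr (.var k))))
    (.lett (pt' (k + 1) k) (.app wf (vt 0 k).toTerm)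
      (.lett (patOfVars (List.range' (2 * k + 1) k ++ [3 * k + 1]))
        (.app r (vtq (k + 1) k (.var k)).toTerm)
        (vtq (2 * k + 1) k (.fold (.inr (.var (3 * k + 1))))).toTerm))
    .nil)

theorem auxIt_eq (k : ℕ) (wf : Iso) :
    auxIt k wf = .fixI 0 (.clauses (auxBody k wf (.ivar 0))) := rfl

theorem itIso_eq (k : ℕ) (wf : Iso) : itIso k wf = .clauses
    (.cons (vtq 0 k (.inl .unit)) (vtq 0 k (.inl .unit)).toTerm
    (.cons (vtq 0 k (.inr (.inl (.var k))))
      (.lett (patOfVars (List.range' (k + 1) k ++ [2 * k + 1]))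
        (.app (auxIt k wf) (vtq 0 k (.var k)).toTerm)
        (vtq (k + 1) k (.inr (.inl (.var (2 * k + 1))))).toTerm)
    (.cons (vtq 0 k (.inr (.inr (.var k))))
      (.lett (patOfVars (List.range' (k + 1) k ++ [2 * k + 1]))
        (.app (auxIt k wf) (vtq 0 k (.var k)).toTerm)
        (vtq (k + 1) k (.inr (.inr (.var (2 * k + 1))))).toTerm)
      .nil))) := rfl

/-- A branch of the selection: the clause matching the control value runs `w` on the other wires
and hands the control value over unchanged. -/
theorem ite_clause_steps {k : ℕ} (hk : 0 < k) {w : Iso} {F : (Fin k → ℤ) → (Fin k → ℤ)}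
    (hw : Sim w F) {l : Clauses} {q : Val}
    (hm : (vtq 0 k q, Term.lett (pt' (k + 1) k) (.app w (vt 0 k).toTerm)
      (vtq (k + 1) k q).toTerm) ∈ l.toList)
    (hq : q.Linear) (hqv : ∀ x ∈ q.fv, x = k) (v : Fin k → ℤ) (c u : Val) (hcl : c.fv = ∅)
    (hu : q.inst (fun x => if x = k then c else .unit) = u) :
    Steps (.app (.clauses l) (encq v u).toTerm) (encq (F v) u).toTerm := by
  let env : ℕ → Val := fun x => if x < k then encZ (ext v x) else if x = k then c else
    encZ (ext (F v) (x - (k + 1)))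
  have hc : ClosedEnv env := fun x => by
    simp only [env]; split_ifs <;> simp [encZ_fv, hcl]
  have hqi : q.inst env = u := by
    rw [← hu, ← Val.applySub_res env {k} q (by simpa [Finset.subset_iff] using hqv),
      ← Val.applySub_res (fun x => if x = k then c else .unit) {k} q
        (by simpa [Finset.subset_iff] using hqv)]
    congr 1
    funext x
    by_cases hx : x = k <;> simp [res, hx, env]
  have hv₀ : ∀ i : Fin k, env (0 + i) = encZ (v i) := fun i => by simp [env]
  have hv₁ : ∀ i : Fin k, env (k + 1 + i) = encZ (F v i) := fun i => by
    have h₁ : ¬ k + 1 + (i : ℕ) < k := by omega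
    have h₂ : ¬ k + 1 + (i : ℕ) = k := by omega
    simp [env, h₁, h₂]
  rw [← vtq_inst hv₀ hqi, ← vtq_inst hv₁ hqi]
  refine clause_steps hm (vtq_linear hq fun x hx => by have := hqv x hx; omega) ?_
  refine let_steps hc (by rw [pt'_toVal _ hk]; exact vt_linear _ _) ?_ ?_ ?_
  · intro x; simp only [mem_vt_fv, mem_vtq_fv]; omega
  · rw [pt'_toVal _ hk, vt_inst hv₀, vt_inst hv₁]; exact hw v
  refine value_steps ?_ rfl
  rw [pt'_toVal _ hk]
  intro x; simp only [mem_vt_fv, mem_vtq_fv, Finset.mem_union]; tauto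

theorem snoc_init_last {k : ℕ} (v : Fin (k + 1) → ℤ) :
    (Fin.snoc (Fin.init v) (v (Fin.last k)) : Fin (k + 1) → ℤ) = v := Fin.snoc_init_self v

theorem sim_ite {k : ℕ} (hk : 0 < k) {wf wg wh : Iso} {F G H : (Fin k → ℤ) → (Fin k → ℤ)}
    (hf : Sim wf F) (hg : Sim wg G) (hh : Sim wh H) :
    Sim (ifIso k wf wg wh) (fun v : Fin (k + 1) → ℤ => Fin.snoc
        ((if 0 < v (Fin.last k) then F else if v (Fin.last k) = 0 then G else H) (Fin.init v))
        (v (Fin.last k))) := by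
  intro v
  conv_lhs => rw [← snoc_init_last v]
  rw [encTup_snoc, encTup_snoc, ifIso_eq]
  generalize v (Fin.last k) = z
  rcases lt_trichotomy z 0 with h | rfl | h
  · rw [if_neg (by omega), if_neg (by omega), encZ_neg h]
    refine ite_clause_steps hk hh (q := .inr (.inr (.var k))) (by simp [Clauses.toList]) trivial
      (by simp [Val.fv]) _ (enpos (z.natAbs - 1)) _ (enpos_fv _) (by simp [Val.inst, Val.applySub])
  · rw [if_neg (by omega), if_pos rfl, encZ_zero]
    refine ite_clause_steps hk hg (q := .inl .unit) (by simp [Clauses.toList]) trivial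
      (by simp [Val.fv]) _ .unit _ rfl (by simp [Val.inst, Val.applySub])
  · rw [if_pos h, encZ_pos h]
    refine ite_clause_steps hk hf (q := .inr (.inl (.var k))) (by simp [Clauses.toList]) trivial
      (by simp [Val.fv]) _ (enpos (z.natAbs - 1)) _ (enpos_fv _) (by simp [Val.inst, Val.applySub])

theorem vtq_var_linear {s c x : ℕ} (h : x < s ∨ s + c ≤ x) : (vtq s c (.var x)).Linear :=
  vtq_linear trivial (by simpa [Val.fv] using h)

/-- The auxiliary iso, applied to a vector and to the encoding of `n + 1`, applies `F` to the
vector `n + 1` times. -/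
theorem aux_steps {k : ℕ} (hk : 0 < k) {w : Iso} {F : (Fin k → ℤ) → (Fin k → ℤ)} (hw : Sim w F)
    (hcl : ∀ a, Iso.isoSub 0 a w = w) (n : ℕ) : ∀ v : Fin k → ℤ,
    Steps (.app (auxIt k w) (encq v (enpos n)).toTerm) (encq (F^[n + 1] v) (enpos n)).toTerm := by
  have unroll : ∀ t, Step (.app (auxIt k w) t) (.app (.clauses (auxBody k w (auxIt k w))) t) := by
    intro t
    have := Step.isoRec (f := 0) (ω := .clauses (auxBody k w (.ivar 0))) (t := t)
    rw [← auxIt_eq] at this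
    simpa [Iso.isoSub, auxBody, Clauses.isoSub, Term.isoSub, toTerm_isoSub, hcl] using this
  induction n with
  | zero =>
    intro v
    refine Relation.ReflTransGen.head (unroll _) ?_
    let env : ℕ → Val := fun x => encZ (if x < k then ext v x else ext (F v) (x - k))
    have hc : ClosedEnv env := fun x => encZ_fv _
    have hv₀ : ∀ i : Fin k, env (0 + i) = encZ (v i) := fun i => by simp [env]
    have hv₁ : ∀ i : Fin k, env (k + i) = encZ (F v i) := fun i => by simp [env]
    have hq : (Val.fold (.inl .unit)).inst env = enpos 0 := rfl
    rw [← vtq_inst hv₀ hq, show F^[0 + 1] v = F v from rfl, ← vtq_inst hv₁ hq]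
    refine clause_steps (by simp [auxBody, Clauses.toList]; exact .inl rfl)
      (vtq_linear trivial (by simp [Val.fv])) ?_
    refine let_steps hc (by rw [pt'_toVal _ hk]; exact vt_linear _ _) ?_ ?_ ?_
    · intro x; simp only [mem_vt_fv, mem_vtq_fv]; omega
    · rw [pt'_toVal _ hk, vt_inst hv₀, vt_inst hv₁]; exact hw v
    refine value_steps ?_ rfl
    rw [pt'_toVal _ hk]
    intro x; simp only [mem_vt_fv, mem_vtq_fv, Finset.mem_union]; simp [Val.fv]; omega
  | succ n ih =>
    intro v
    refine Relation.ReflTransGen.head (unroll _) ?_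
    let env : ℕ → Val := fun x => if x < k then encZ (ext v x) else if x = k then enpos n else
      if x < 2 * k + 1 then encZ (ext (F v) (x - (k + 1))) else
      if x < 3 * k + 1 then encZ (ext (F^[n + 1] (F v)) (x - (2 * k + 1))) else enpos n
    have hc : ClosedEnv env := fun x => by
      simp only [env]; split_ifs <;> simp [encZ_fv, enpos_fv]
    have hv₀ : ∀ i : Fin k, env (0 + i) = encZ (v i) := fun i => by simp [env]
    have hv₁ : ∀ i : Fin k, env (k + 1 + i) = encZ (F v i) := fun i => by
      have h₁ : ¬ k + 1 + (i : ℕ) < k := by omega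
      have h₂ : ¬ k + 1 + (i : ℕ) = k := by omega
      have h₃ : k + 1 + (i : ℕ) < 2 * k + 1 := by omega
      simp only [env, if_neg h₁, if_neg h₂, if_pos h₃]
      rw [show k + 1 + (i : ℕ) - (k + 1) = i by omega, ext_val]
    have hv₂ : ∀ i : Fin k, env (2 * k + 1 + i) = encZ (F^[n + 1] (F v) i) := fun i => by
      have h₁ : ¬ 2 * k + 1 + (i : ℕ) < k := by omega
      have h₂ : ¬ 2 * k + 1 + (i : ℕ) = k := by omega
      have h₃ : ¬ 2 * k + 1 + (i : ℕ) < 2 * k + 1 := by omega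
      have h₄ : 2 * k + 1 + (i : ℕ) < 3 * k + 1 := by omega
      simp only [env, if_neg h₁, if_neg h₂, if_neg h₃, if_pos h₄]
      rw [show 2 * k + 1 + (i : ℕ) - (2 * k + 1) = i by omega, ext_val]
    have e₁ : env k = enpos n := by simp [env]
    have e₂ : env (3 * k + 1) = enpos n := by
      have h₁ : ¬ 3 * k + 1 < k := by omega
      have h₂ : ¬ 3 * k + 1 = k := by omega
      have h₃ : ¬ 3 * k + 1 < 2 * k + 1 := by omega
      simp only [env, if_neg h₁, if_neg h₂, if_neg h₃, lt_irrefl, if_false]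
    have q₁ : (Val.fold (.inr (.var k))).inst env = enpos (n + 1) := by
      simp [Val.inst, Val.applySub, e₁, enpos]
    have q₂ : (Val.fold (.inr (.var (3 * k + 1)))).inst env = enpos (n + 1) := by
      simp [Val.inst, Val.applySub, e₂, enpos]
    have r₁ : (Val.var k).inst env = enpos n := by simp [Val.inst, Val.applySub, e₁]
    have r₂ : (Val.var (3 * k + 1)).inst env = enpos n := by simp [Val.inst, Val.applySub, e₂]
    rw [← vtq_inst hv₀ q₁, show F^[n + 1 + 1] v = F^[n + 1] (F v) from rfl, ← vtq_inst hv₂ q₂]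
    refine clause_steps (by simp [auxBody, Clauses.toList]; exact .inr rfl)
      (vtq_linear trivial (by simp [Val.fv])) ?_
    refine let_steps hc (by rw [pt'_toVal _ hk]; exact vt_linear _ _) ?_ ?_ ?_
    · intro x; simp only [mem_vt_fv, mem_vtq_fv]; omega
    · rw [pt'_toVal _ hk, vt_inst hv₀, vt_inst hv₁]; exact hw v
    refine let_steps hc
      (by rw [patOfVars_snoc_toVal]; exact vtq_var_linear (by omega)) ?_ ?_ ?_
    · rw [pt'_toVal _ hk]
      intro x; simp only [mem_vt_fv, mem_vtq_fv, Finset.mem_union, Val.fv]; tauto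
    · rw [patOfVars_snoc_toVal, vtq_inst hv₁ r₁, vtq_inst hv₂ r₂]; exact ih (F v)
    refine value_steps ?_ rfl
    rw [patOfVars_snoc_toVal]
    intro x; simp only [mem_vtq_fv, Finset.mem_union, Val.fv]; tauto

theorem iterate_clause_steps {k : ℕ} (hk : 0 < k) {w : Iso} {F : (Fin k → ℤ) → (Fin k → ℤ)}
    (hw : Sim w F) (hcl : ∀ a, Iso.isoSub 0 a w = w) {l : Clauses} {inj : Val → Val}
    (hinj : inj = (fun q => .inr (.inl q)) ∨ inj = (fun q => .inr (.inr q)))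
    (hm : (vtq 0 k (inj (.var k)), Term.lett (patOfVars (List.range' (k + 1) k ++ [2 * k + 1]))
        (.app (auxIt k w) (vtq 0 k (.var k)).toTerm)
        (vtq (k + 1) k (inj (.var (2 * k + 1)))).toTerm) ∈ l.toList) (v : Fin k → ℤ) (n : ℕ) :
    Steps (.app (.clauses l) (encq v (inj (enpos n))).toTerm)
      (encq (F^[n + 1] v) (inj (enpos n))).toTerm := by
  let env : ℕ → Val := fun x => if x < k then encZ (ext v x) else if x = k then enpos n else
      if x < 2 * k + 1 then encZ (ext (F^[n + 1] v) (x - (k + 1))) else enpos n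
  have hc : ClosedEnv env := fun x => by
    simp only [env]; split_ifs <;> simp [encZ_fv, enpos_fv]
  have hv₀ : ∀ i : Fin k, env (0 + i) = encZ (v i) := fun i => by simp [env]
  have hv₁ : ∀ i : Fin k, env (k + 1 + i) = encZ (F^[n + 1] v i) := fun i => by
    have h₁ : ¬ k + 1 + (i : ℕ) < k := by omega
    have h₂ : ¬ k + 1 + (i : ℕ) = k := by omega
    have h₃ : k + 1 + (i : ℕ) < 2 * k + 1 := by omega
    simp only [env, if_neg h₁, if_neg h₂, if_pos h₃]
    rw [show k + 1 + (i : ℕ) - (k + 1) = i by omega, ext_val]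
  have e₁ : env k = enpos n := by simp [env]
  have e₂ : env (2 * k + 1) = enpos n := by
    have h₁ : ¬ 2 * k + 1 < k := by omega
    have h₂ : ¬ 2 * k + 1 = k := by omega
    simp [env, h₁, h₂]
  have r₁ : (Val.var k).inst env = enpos n := by simp [Val.inst, Val.applySub, e₁]
  have r₂ : (Val.var (2 * k + 1)).inst env = enpos n := by simp [Val.inst, Val.applySub, e₂]
  have hi : ∀ q : Val, (inj q).inst env = inj (q.inst env) := by
    rcases hinj with rfl | rfl <;> exact fun _ => rfl
  have hfv : ∀ q : Val, (inj q).fv = q.fv := by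
    rcases hinj with rfl | rfl <;> exact fun _ => rfl
  have hl : (inj (.var k)).Linear := by
    rcases hinj with rfl | rfl <;> trivial
  rw [← vtq_inst hv₀ ((hi (.var k)).trans (by rw [r₁])),
    ← vtq_inst hv₁ ((hi (.var (2 * k + 1))).trans (by rw [r₂]))]
  refine clause_steps hm (vtq_linear hl (by simp [hfv, Val.fv])) ?_
  refine let_steps hc
      (by rw [patOfVars_snoc_toVal]; exact vtq_var_linear (by omega)) ?_ ?_ ?_
  · intro x; simp only [mem_vtq_fv, Val.fv, hfv]; exact id
  · rw [patOfVars_snoc_toVal, vtq_inst hv₀ r₁, vtq_inst hv₁ r₂]; exact aux_steps hk hw hcl n v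
  refine value_steps ?_ rfl
  rw [patOfVars_snoc_toVal]
  intro x; simp only [mem_vtq_fv, Finset.mem_union, Val.fv, hfv]; tauto

theorem sim_it {k : ℕ} (hk : 0 < k) {w : Iso} {F : (Fin k → ℤ) → (Fin k → ℤ)} (hw : Sim w F)
    (hcl : ∀ a, Iso.isoSub 0 a w = w) :
    Sim (itIso k w) (fun v : Fin (k + 1) → ℤ =>
      Fin.snoc (F^[(v (Fin.last k)).natAbs] (Fin.init v)) (v (Fin.last k))) := by
  intro v
  conv_lhs => rw [← snoc_init_last v]
  rw [encTup_snoc, encTup_snoc, itIso_eq]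
  generalize v (Fin.last k) = z
  rcases lt_trichotomy z 0 with h | rfl | h
  · rw [encZ_neg h]
    obtain ⟨n, hn⟩ : ∃ n, z.natAbs = n + 1 := ⟨z.natAbs - 1, by omega⟩
    rw [hn, Nat.add_sub_cancel]
    refine iterate_clause_steps hk hw hcl (inj := fun q => .inr (.inr q)) (.inr rfl) ?_ _ _
    exact .tail _ (.tail _ (.head _))
  · rw [encZ_zero]
    let env : ℕ → Val := fun x => encZ (ext (Fin.init v) x)
    have hv₀ : ∀ i : Fin k, env (0 + i) = encZ (Fin.init v i) := fun i => by simp [env]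
    have hi := vtq_inst hv₀ (show (Val.inl .unit).inst env = .inl .unit from rfl)
    exact value_clause_steps env (.head _) (vtq_linear trivial (by simp [Val.fv]))
      (fun _ h => h) hi hi
  · rw [encZ_pos h]
    obtain ⟨n, hn⟩ : ∃ n, z.natAbs = n + 1 := ⟨z.natAbs - 1, by omega⟩
    rw [hn, Nat.add_sub_cancel]
    refine iterate_clause_steps hk hw hcl (inj := fun q => .inr (.inl q)) (.inl rfl) ?_ _ _
    exact .tail _ (.head _)

theorem simulation {k : ℕ} (f : RPPx.RPP k) : Sim (isosOf f) (RPPx.eval f) := by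
  induction f with
  | id => exact .of_one (fun z => z) (fun _ => rfl) sim_id
  | suc => exact .of_one (fun z => z + 1) (fun _ => rfl) sim_suc
  | pre => exact .of_one (fun z => z - 1) (fun _ => rfl) sim_pre
  | sign => exact .of_one (fun z => -z) (fun _ => rfl) sim_sign
  | swap => exact sim_swap
  | comp f g hf hg => exact sim_comp (F := RPPx.eval f) (G := RPPx.eval g) (RPP_pos f) hf hg
  | par f g hf hg => exact sim_par (RPP_pos f) (RPP_pos g) hf hg
  | it f hf => exact sim_it (RPP_pos f) hf fun a => isosOf_isoSub a f
  | ite f g h hf hg hh => exact sim_ite (RPP_pos f) hf hg hh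

end LinRev

namespace LinRev

/-! ### Typing contexts and patterns -/

/-- The context that gives each variable `x ∈ S` the type `T x`. -/
def cres (T : ℕ → Ty) (S : Finset ℕ) : Ctx := fun x => if x ∈ S then some (T x) else none

/-- Typing of values, without linearity, relative to an assignment of types to all variables. -/
inductive HT (T : ℕ → Ty) : Val → Ty → Prop
  | unit : HT T .unit .one
  | var (x : ℕ) : HT T (.var x) (T x)
  | inl {v A B} : HT T v A → HT T (.inl v) (.sum A B)
  | inr {v A B} : HT T v B → HT T (.inr v) (.sum A B)
  | fold {v A} : HT T v A.unfold → HT T (.fold v) (.mu A)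
  | pair {v w A B} : HT T v A → HT T w B → HT T (.pair v w) (.prod A B)

theorem HT.var' {T : ℕ → Ty} {x : ℕ} {A : Ty} (h : T x = A) : HT T (.var x) A := h ▸ .var x

theorem cres_empty (T : ℕ → Ty) : cres T ∅ = Ctx.empty := by
  funext x; simp [cres, Ctx.empty]

theorem cres_single (T : ℕ → Ty) (x : ℕ) : cres T {x} = Ctx.single x (T x) := by
  funext y
  by_cases h : y = x <;> simp [cres, Ctx.single, h]

theorem cres_union (T : ℕ → Ty) (S₁ S₂ : Finset ℕ) :
    cres T (S₁ ∪ S₂) = (cres T S₁).union (cres T S₂) := by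
  funext x
  by_cases h : x ∈ S₁ <;> simp [cres, Ctx.union, h]

theorem cres_disj {T : ℕ → Ty} {S₁ S₂ : Finset ℕ} (h : Disjoint S₁ S₂) :
    Ctx.disj (cres T S₁) (cres T S₂) := by
  intro x
  by_cases hx : x ∈ S₁
  · right; simp [cres, Finset.disjoint_left.1 h hx]
  · left; simp [cres, hx]

theorem HT.vTy {T : ℕ → Ty} {v : Val} {A : Ty} (h : HT T v A) (hv : v.Linear) :
    VTy (cres T v.fv) v A := by
  induction h with
  | unit => rw [Val.fv, cres_empty]; exact .unit
  | var x => rw [Val.fv, cres_single]; exact .var x _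
  | inl _ ih => exact .inl (ih hv)
  | inr _ ih => exact .inr (ih hv)
  | fold _ ih => exact .fold (ih hv)
  | pair _ _ ih₁ ih₂ =>
    rw [Val.fv, cres_union]
    exact .pair (ih₁ hv.1) (ih₂ hv.2.1) (cres_disj hv.2.2)

theorem HT.termTy {T : ℕ → Ty} {v : Val} {A : Ty} {Ψ : IsoCtx} (h : HT T v A) (hv : v.Linear) :
    TermTy (cres T v.fv) Ψ v.toTerm A := by
  induction h with
  | unit => rw [Val.fv, cres_empty]; exact .unit _
  | var x => rw [Val.fv, cres_single]; exact .var x _ _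
  | inl _ ih => exact .inl (ih hv)
  | inr _ ih => exact .inr (ih hv)
  | fold _ ih => exact .fold (ih hv)
  | pair _ _ ih₁ ih₂ =>
    rw [Val.fv, cres_union]
    exact .pair (ih₁ hv.1) (ih₂ hv.2.1) (cres_disj hv.2.2)

theorem HT.patTy {T : ℕ → Ty} : ∀ {p : Pat} {A : Ty}, HT T p.toVal A → p.toVal.Linear →
    PatTy p A (cres T p.toVal.fv)
  | .pvar x, A, h, _ => by
      cases h
      rw [Pat.toVal, Val.fv, cres_single]
      exact .pvar x _
  | .ppair p q, A, h, hl => by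
      cases h with
      | pair h₁ h₂ =>
        rw [Pat.toVal, Val.fv, cres_union]
        exact .ppair (HT.patTy h₁ hl.1) (HT.patTy h₂ hl.2.1) (cres_disj hl.2.2)

/-- Typing of one `let` of a clause body: the call consumes the variables of `V` and the pattern
supplies its own. -/
theorem let_ty {T : ℕ → Ty} {S : Finset ℕ} {Ψ : IsoCtx} {w : Iso} {V : Val} {p : Pat} {t : Term}
    {A B C : Ty} (hw : ∀ Γ t, TermTy Γ Ψ t A → TermTy Γ Ψ (.app w t) B) (hV : V.Linear)
    (hVT : HT T V A) (hp : p.toVal.Linear) (hpT : HT T p.toVal B) (hS : V.fv ⊆ S)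
    (hd : Disjoint (S \ V.fv) p.toVal.fv)
    (ht : TermTy (cres T ((S \ V.fv) ∪ p.toVal.fv)) Ψ t C) :
    TermTy (cres T S) Ψ (.lett p (.app w V.toTerm) t) C := by
  rw [← Finset.union_sdiff_of_subset hS, cres_union]
  rw [cres_union] at ht
  exact .lett (hw _ _ (hVT.termTy hV)) (hpT.patTy hp) ht (cres_disj Finset.disjoint_sdiff)
    (cres_disj hd)

theorem value_ty {T : ℕ → Ty} {S : Finset ℕ} {Ψ : IsoCtx} {V : Val} {A : Ty} (hV : V.Linear)
    (hVT : HT T V A) (hS : V.fv = S) : TermTy (cres T S) Ψ V.toTerm A :=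
  hS ▸ hVT.termTy hV

/-- A clause is typed under some context. -/
def ClauseTy (Ψ : IsoCtx) (c : Val × Term) (A B : Ty) : Prop :=
  ∃ Γ, VTy Γ c.1 A ∧ TermTy Γ Ψ c.2 B

theorem ClauseTy.mk {Ψ : IsoCtx} {p : Val} {e : Term} {A B : Ty} (T : ℕ → Ty) (hp : p.Linear)
    (hpT : HT T p A) (he : TermTy (cres T p.fv) Ψ e B) : ClauseTy Ψ (p, e) A B :=
  ⟨_, hpT.vTy hp, he⟩

theorem IsoTy.of_clauseTy {Ψ : IsoCtx} {l : Clauses} {A B : Ty}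
    (h : ∀ c ∈ l.toList, ClauseTy Ψ c A B)
    (h₁ : OD A {v | ∃ e, (v, e) ∈ Clauses.toList l})
    (h₂ : OD B {w | ∃ c ∈ Clauses.toList l, Term.valOf c.2 = some w}) :
    IsoTy Ψ (.clauses l) A B := by
  classical
  choose! Γ hΓ using h
  exact .clauses Γ (fun c hc => (hΓ c hc).1) (fun c hc => (hΓ c hc).2) h₁ h₂

theorem asVal_toTerm : ∀ v : Val, v.toTerm.asVal = some v
  | .unit => rfl
  | .var _ => rfl
  | .inl v => by simp [Val.toTerm, Term.asVal, asVal_toTerm v]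
  | .inr v => by simp [Val.toTerm, Term.asVal, asVal_toTerm v]
  | .fold v => by simp [Val.toTerm, Term.asVal, asVal_toTerm v]
  | .pair v w => by simp [Val.toTerm, Term.asVal, asVal_toTerm v, asVal_toTerm w]

theorem valOf_toTerm (v : Val) : v.toTerm.valOf = some v := by
  rw [← asVal_toTerm v]
  cases v <;> rfl

/-! ### Tuples of integers with a distinguished last component -/

/-- The type `Z ⊗ … ⊗ Z ⊗ B` with `k` factors `Z`. -/
def Zq (k : ℕ) (B : Ty) : Ty := tupleTy (List.replicate k ZTy ++ [B])

theorem Zpow_succ (k : ℕ) : Zpow (k + 1) = Zq k ZTy := by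
  rw [Zpow, Zq, List.replicate_succ']

theorem Zq_succ (k : ℕ) (B : Ty) : Zq (k + 1) B = .prod ZTy (Zq k B) := by
  cases k <;> rfl

theorem vtq_succ (s k : ℕ) (q : Val) : vtq s (k + 1) q = .pair (.var s) (vtq (s + 1) k q) := by
  rw [vtq, List.range'_succ, List.map_cons, List.cons_append, tupleV_cons _ (by simp), vtq]

theorem vtq_ht {T : ℕ → Ty} {q : Val} {B : Ty} (hq : HT T q B) : ∀ (k s : ℕ),
    (∀ x, s ≤ x → x < s + k → T x = ZTy) → HT T (vtq s k q) (Zq k B)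
  | 0, s, _ => hq
  | k + 1, s, h => by
      rw [vtq_succ, Zq_succ]
      exact .pair (.var' (h s le_rfl (by omega)))
        (vtq_ht hq k (s + 1) fun x h₁ h₂ => h x (by omega) (by omega))

theorem vt_ht {T : ℕ → Ty} {s k : ℕ} (hk : 0 < k) (h : ∀ x, s ≤ x → x < s + k → T x = ZTy) :
    HT T (vt s k) (Zpow k) := by
  obtain ⟨k, rfl⟩ : ∃ j, k = j + 1 := ⟨k - 1, by omega⟩
  rw [← vtq_var, Zpow_succ]
  exact vtq_ht (.var' (h _ (by omega) (by omega))) k s fun x h₁ h₂ => h x h₁ (by omega)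

theorem vtq_inj {q q' : Val} : ∀ {k s s' : ℕ}, vtq s k q = vtq s' k q' → q = q'
  | 0, _, _, h => h
  | k + 1, s, s', h => by
      rw [vtq_succ, vtq_succ] at h
      exact vtq_inj (Val.pair.inj h).2

/-- Exhaustivity passes from the last component to the tuple, even when different members of the
family name the leading variables differently: the tuple is split from the right, and once its
tail is fixed a single leading variable remains. -/
theorem od_vtq {B : Ty} {S : Set Val} (hS : OD B S) : ∀ (k : ℕ) (s : Val → ℕ),
    OD (Zq k B) ((fun q => vtq (s q) k q) '' S)
  | 0, s => by
      have h : (fun q => vtq (s q) 0 q) '' S = S := Set.image_id' S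
      rw [h]; exact hS
  | k + 1, s => by
      rw [Zq_succ]
      simp only [vtq_succ]
      refine .prodR ?_ ?_ ?_
      · rintro _ ⟨q, _, rfl⟩
        exact ⟨_, _, rfl⟩
      · have h : proj2 ((fun q => Val.pair (.var (s q)) (vtq (s q + 1) k q)) '' S)
            = (fun q => vtq ((fun q => s q + 1) q) k q) '' S := by
          ext w
          constructor
          · rintro ⟨v, q, hq, h⟩
            exact ⟨q, hq, (Val.pair.inj h).2⟩
          · rintro ⟨q, hq, rfl⟩
            exact ⟨_, q, hq, rfl⟩
        rw [h]
        exact od_vtq hS k _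
      · rintro w ⟨v, q, hq, h⟩
        obtain ⟨rfl, rfl⟩ := Val.pair.inj h
        have h : sect2 ((fun q => Val.pair (.var (s q)) (vtq (s q + 1) k q)) '' S)
            (vtq (s q + 1) k q) = {Val.var (s q)} := by
          ext v
          constructor
          · rintro ⟨q', hq', h'⟩
            obtain ⟨hv, h'⟩ := Val.pair.inj h'
            rw [vtq_inj h'] at hv
            exact hv.symm
          · rintro rfl
            exact ⟨q, hq, rfl⟩
        rw [h]
        exact .var _ _

theorem od_vt (s : ℕ) {k : ℕ} (hk : 0 < k) : OD (Zpow k) {vt s k} := by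
  obtain ⟨k, rfl⟩ : ∃ j, k = j + 1 := ⟨k - 1, by omega⟩
  have := od_vtq (.var ZTy (s + k)) k fun _ => s
  rwa [Set.image_singleton, vtq_var, ← Zpow_succ] at this

theorem od_npos (x : ℕ) : OD nposTy {.fold (.inl .unit), .fold (.inr (.var x))} := by
  have h : OD nposTy _ := OD.mu (A := .sum .one (.tvar 0)) (OD.sum .unit (.var nposTy x))
  convert h using 1
  ext v
  simp [eq_comm]
  tauto

/-- Sign analysis of an integer. -/
theorem od_sign {S T : Set Val} (hS : OD nposTy S) (hT : OD nposTy T) :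
    OD ZTy ({.inl .unit} ∪ ((fun q => .inr (.inl q)) '' S ∪ (fun q => .inr (.inr q)) '' T)) := by
  have h : OD ZTy _ := OD.sum .unit (OD.sum hS hT)
  convert h using 1
  simp [Set.image_union, Set.image_image]

theorem od_sign_var (x y : ℕ) :
    OD ZTy {.inl .unit, .inr (.inl (.var x)), .inr (.inr (.var y))} := by
  convert od_sign (.var nposTy x) (.var nposTy y) using 1
  ext v
  simp
  tauto

end LinRev

namespace LinRev

/-! ### Well-typedness of the translation -/

theorem IsoTy.of_outputs {Ψ : IsoCtx} {l : Clauses} {A B : Ty} (ws : List Val)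
    (h : ∀ c ∈ l.toList, ClauseTy Ψ c A B) (h₁ : OD A {v | v ∈ l.toList.map Prod.fst})
    (hw : l.toList.map (fun c => c.2.valOf) = ws.map some) (h₂ : OD B {w | w ∈ ws}) :
    IsoTy Ψ (.clauses l) A B := by
  refine .of_clauseTy h (by simpa using h₁) ?_
  convert h₂ using 1
  ext w
  have : some w ∈ l.toList.map (fun c => c.2.valOf) ↔ some w ∈ ws.map some := by rw [hw]
  simpa using this

/-- A clause whose body is a value. -/
theorem ClauseTy.value {Ψ : IsoCtx} {p e : Val} {A B : Ty} (T : ℕ → Ty) (hp : p.Linear)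
    (hpT : HT T p A) (he : e.Linear) (heT : HT T e B) (hv : e.fv = p.fv) :
    ClauseTy Ψ (p, e.toTerm) A B :=
  .mk T hp hpT (value_ty he heT hv)

theorem OD.congr {A : Ty} {S T : Set Val} (h : OD A S) (he : ∀ v, v ∈ S ↔ v ∈ T) : OD A T :=
  Set.ext he ▸ h

theorem od_singleton {A : Ty} {v : Val} (h : OD A {v}) : OD A {w | w ∈ [v]} :=
  h.congr (by simp)

theorem id_ty : IsoTy none idIso ZTy ZTy := by
  refine .of_outputs [.var 0] ?_ (od_singleton (.var _ _)) rfl (od_singleton (.var _ _))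
  simp only [Clauses.toList, List.mem_singleton, forall_eq]
  exact .value (e := .var 0) (fun _ => ZTy) trivial (.var 0) trivial (.var 0) rfl

theorem swap_ty : IsoTy none swapIso (.prod ZTy ZTy) (.prod ZTy ZTy) := by
  have h : ∀ x y, OD (.prod ZTy ZTy) {Val.pair (.var x) (.var y)} := fun x y =>
    od_vtq (.var ZTy y) 1 (fun _ => x) |>.congr (by simp [vtq, tupleV])
  refine .of_outputs [.pair (.var 1) (.var 0)] ?_ (od_singleton (h _ _)) rfl
    (od_singleton (h _ _))
  simp only [Clauses.toList, List.mem_singleton, forall_eq]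
  refine .value (fun _ => ZTy) ?_ (.pair (.var 0) (.var 1)) ?_ (.pair (.var 1) (.var 0)) ?_
  · simp [Val.Linear, Val.fv]
  · simp [Val.Linear, Val.fv]
  · simp [Val.fv, Finset.union_comm]

theorem ht_zpos {T : ℕ → Ty} {q : Val} (h : HT T q nposTy) : HT T (.inr (.inl q)) ZTy :=
  .inr (.inl h)

theorem ht_zneg {T : ℕ → Ty} {q : Val} (h : HT T q nposTy) : HT T (.inr (.inr q)) ZTy :=
  .inr (.inr h)

theorem ht_zzero {T : ℕ → Ty} : HT T (.inl .unit) ZTy := .inl .unit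

theorem ht_one {T : ℕ → Ty} : HT T (.fold (.inl .unit)) nposTy := .fold (.inl .unit)

theorem ht_succ {T : ℕ → Ty} {q : Val} (h : HT T q nposTy) :
    HT T (.fold (.inr q)) nposTy := .fold (.inr h)

theorem sign_ty : IsoTy none signIso ZTy ZTy := by
  refine .of_outputs [.inr (.inr (.var 0)), .inr (.inl (.var 0)), .inl .unit] ?_
    ((od_sign_var 0 0).congr ?_) rfl ((od_sign_var 0 0).congr ?_)
  · simp only [Clauses.toList, List.forall_mem_cons]
    refine ⟨.value (fun _ => nposTy) ?_ (ht_zpos (.var 0)) ?_ (ht_zneg (.var 0)) rfl,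
      .value (fun _ => nposTy) ?_ (ht_zneg (.var 0)) ?_ (ht_zpos (.var 0)) rfl,
      .value (fun _ => nposTy) ?_ ht_zzero ?_ ht_zzero rfl, by simp⟩ <;> trivial
  all_goals
    intro v
    simp [Clauses.toList]
    tauto

theorem od_pos_split : OD ZTy {.inl .unit, .inr (.inl (.fold (.inl .unit))),
    .inr (.inl (.fold (.inr (.var 0)))), .inr (.inr (.var 0))} := by
  refine (od_sign (od_npos 0) (.var nposTy 0)).congr fun v => ?_
  simp
  tauto

theorem od_neg_split : OD ZTy {.inl .unit, .inr (.inr (.fold (.inl .unit))),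
    .inr (.inr (.fold (.inr (.var 0)))), .inr (.inl (.var 0))} := by
  refine (od_sign (.var nposTy 0) (od_npos 0)).congr fun v => ?_
  simp
  tauto

theorem suc_ty : IsoTy none succIso ZTy ZTy := by
  refine .of_outputs [.inr (.inl (.fold (.inl .unit))), .inr (.inl (.fold (.inr (.var 0)))),
    .inl .unit, .inr (.inr (.var 0))] ?_ (od_neg_split.congr ?_) rfl (od_pos_split.congr ?_)
  · simp only [Clauses.toList, List.forall_mem_cons]
    refine ⟨.value (fun _ => nposTy) ?_ ht_zzero ?_ (ht_zpos ht_one) rfl,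
      .value (fun _ => nposTy) ?_ (ht_zpos (.var 0)) ?_ (ht_zpos (ht_succ (.var 0))) rfl,
      .value (fun _ => nposTy) ?_ (ht_zneg ht_one) ?_ ht_zzero rfl,
      .value (fun _ => nposTy) ?_ (ht_zneg (ht_succ (.var 0))) ?_ (ht_zneg (.var 0)) rfl,
      by simp⟩ <;> trivial
  all_goals
    intro v
    simp [Clauses.toList]
    tauto

theorem pre_ty : IsoTy none succIso.inv ZTy ZTy := by
  rw [succIso_inv]
  refine .of_outputs [.inl .unit, .inr (.inl (.var 0)), .inr (.inr (.fold (.inl .unit))),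
    .inr (.inr (.fold (.inr (.var 0))))] ?_ (od_pos_split.congr ?_) rfl (od_neg_split.congr ?_)
  · simp only [Clauses.toList, List.forall_mem_cons]
    refine ⟨.value (fun _ => nposTy) ?_ (ht_zpos ht_one) ?_ ht_zzero rfl,
      .value (fun _ => nposTy) ?_ (ht_zpos (ht_succ (.var 0))) ?_ (ht_zpos (.var 0)) rfl,
      .value (fun _ => nposTy) ?_ ht_zzero ?_ (ht_zneg ht_one) rfl,
      .value (fun _ => nposTy) ?_ (ht_zneg (.var 0)) ?_ (ht_zneg (ht_succ (.var 0))) rfl,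
      by simp⟩ <;> trivial
  all_goals
    intro v
    simp [Clauses.toList]
    tauto

theorem call_ty {Ψ : IsoCtx} {w : Iso} {A B : Ty} (hw : IsoTy none w A B) :
    ∀ Γ t, TermTy Γ Ψ t A → TermTy Γ Ψ (.app w t) B := fun _ _ ht => .appC hw ht

theorem comp_ty {k : ℕ} (hk : 0 < k) {wf wg : Iso} (hf : IsoTy none wf (Zpow k) (Zpow k))
    (hg : IsoTy none wg (Zpow k) (Zpow k)) :
    IsoTy none (compIso k wf wg) (Zpow k) (Zpow k) := by
  refine .of_outputs [vt (2 * k) k] ?_ (od_singleton (od_vt 0 hk))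
    (by simp [Clauses.toList, Term.valOf, valOf_toTerm]) (od_singleton (od_vt _ hk))
  simp only [Clauses.toList, List.mem_singleton, forall_eq]
  have hT : ∀ s, HT (fun _ => ZTy) (vt s k) (Zpow k) := fun s => vt_ht hk fun _ _ _ => rfl
  have hp : ∀ s, (pt' s k).toVal = vt s k := fun s => pt'_toVal s hk
  refine .mk (fun _ => ZTy) (vt_linear _ _) (hT 0) ?_
  refine let_ty (call_ty hf) (vt_linear _ _) (hT 0) (hp _ ▸ vt_linear _ _) (hp _ ▸ hT _)
    (Finset.Subset.refl _) (by simp) ?_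
  rw [hp]
  refine let_ty (call_ty hg) (vt_linear _ _) (hT k) (hp _ ▸ vt_linear _ _) (hp _ ▸ hT _)
    (by simp) (by simp) ?_
  rw [hp]
  exact value_ty (vt_linear _ _) (hT _) (by simp)

theorem par_ty {j l : ℕ} (hj : 0 < j) (hl : 0 < l) {wf wg : Iso}
    (hf : IsoTy none wf (Zpow j) (Zpow j)) (hg : IsoTy none wg (Zpow l) (Zpow l)) :
    IsoTy none (parIso j l wf wg) (Zpow (j + l)) (Zpow (j + l)) := by
  rw [parIso_eq]
  have hjl : 0 < j + l := by omega
  refine .of_outputs [vt (j + l) (j + l)] ?_ (od_singleton (od_vt 0 hjl))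
    (by simp [Clauses.toList, Term.valOf, valOf_toTerm]) (od_singleton (od_vt _ hjl))
  simp only [Clauses.toList, List.mem_singleton, forall_eq]
  have hT : ∀ s k, 0 < k → HT (fun _ => ZTy) (vt s k) (Zpow k) :=
    fun s k hk => vt_ht hk fun _ _ _ => rfl
  refine .mk (fun _ => ZTy) (vt_linear _ _) (hT 0 _ hjl) ?_
  refine let_ty (call_ty hf) (vt_linear _ _) (hT 0 _ hj) (pt'_toVal _ hj ▸ vt_linear _ _)
    (pt'_toVal _ hj ▸ hT _ _ hj) ?_ ?_ ?_
  · intro x; simp only [mem_vt_fv]; omega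
  · rw [pt'_toVal _ hj, Finset.disjoint_left]
    intro x; simp only [mem_vt_fv, Finset.mem_sdiff]; omega
  rw [pt'_toVal _ hj]
  refine let_ty (call_ty hg) (vt_linear _ _) (hT _ _ hl) (pt'_toVal _ hl ▸ vt_linear _ _)
    (pt'_toVal _ hl ▸ hT _ _ hl) ?_ ?_ ?_
  · intro x; simp only [mem_vt_fv, Finset.mem_union, Finset.mem_sdiff]; omega
  · rw [pt'_toVal _ hl, Finset.disjoint_left]
    intro x; simp only [mem_vt_fv, Finset.mem_union, Finset.mem_sdiff]; omega
  rw [pt'_toVal _ hl]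
  refine value_ty (vt_linear _ _) (hT _ _ hjl) ?_
  ext x; simp only [mem_vt_fv, Finset.mem_union, Finset.mem_sdiff]; omega

theorem od_family {B : Ty} {L : List Val} (h : OD B {q | q ∈ L}) (k : ℕ) (s : Val → ℕ)
    {L' : List Val} (hL : L' = L.map fun q => vtq (s q) k q) : OD (Zq k B) {v | v ∈ L'} := by
  refine (od_vtq h k s).congr fun v => ?_
  simp [hL]

theorem ite_clause_ty {k : ℕ} (hk : 0 < k) {w : Iso} (hw : IsoTy none w (Zpow k) (Zpow k))
    {q : Val} (hq : q.Linear) (hqv : ∀ x ∈ q.fv, x = k)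
    (hqT : HT (fun x => if x = k then nposTy else ZTy) q ZTy) :
    ClauseTy none (vtq 0 k q, Term.lett (pt' (k + 1) k) (.app w (vt 0 k).toTerm)
      (vtq (k + 1) k q).toTerm) (Zpow (k + 1)) (Zpow (k + 1)) := by
  rw [Zpow_succ]
  refine .mk (fun x => if x = k then nposTy else ZTy)
    (vtq_linear hq fun x hx => by have := hqv x hx; omega)
    (vtq_ht hqT _ _ fun x h₀ h => if_neg (by omega)) ?_
  refine let_ty (call_ty hw) (vt_linear _ _) (vt_ht hk fun x h₀ h => if_neg (by omega))
    (pt'_toVal _ hk ▸ vt_linear _ _)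
    (pt'_toVal _ hk ▸ vt_ht hk fun x h₀ h => if_neg (by omega)) ?_ ?_ ?_
  · intro x; simp only [mem_vt_fv, mem_vtq_fv]; omega
  · rw [pt'_toVal _ hk, Finset.disjoint_left]
    intro x; simp only [mem_vt_fv, mem_vtq_fv, Finset.mem_sdiff]
    have := hqv x; grind
  rw [pt'_toVal _ hk]
  refine value_ty (vtq_linear hq fun x hx => by have := hqv x hx; omega)
    (vtq_ht hqT _ _ fun x h₀ h => if_neg (by omega)) ?_
  ext x; simp only [mem_vt_fv, mem_vtq_fv, Finset.mem_union, Finset.mem_sdiff]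
  have := hqv x; grind

theorem ite_ty {k : ℕ} (hk : 0 < k) {wf wg wh : Iso} (hf : IsoTy none wf (Zpow k) (Zpow k))
    (hg : IsoTy none wg (Zpow k) (Zpow k)) (hh : IsoTy none wh (Zpow k) (Zpow k)) :
    IsoTy none (ifIso k wf wg wh) (Zpow (k + 1)) (Zpow (k + 1)) := by
  rw [ifIso_eq]
  have h : OD ZTy {q | q ∈ [.inr (.inl (.var k)), .inl .unit, .inr (.inr (.var k))]} :=
    (od_sign_var k k).congr fun v => by simp; tauto
  refine .of_outputs [vtq (k + 1) k (.inr (.inl (.var k))), vtq (k + 1) k (.inl .unit),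
      vtq (k + 1) k (.inr (.inr (.var k)))] ?_
    (Zpow_succ k ▸ od_family h k (fun _ => 0) (by simp [Clauses.toList]))
    (by simp [Clauses.toList, Term.valOf, valOf_toTerm])
    (Zpow_succ k ▸ od_family h k (fun _ => k + 1) (by simp))
  simp only [Clauses.toList, List.forall_mem_cons]
  exact ⟨ite_clause_ty hk hf trivial (by simp [Val.fv]) (ht_zpos (.var' (if_pos rfl))),
    ite_clause_ty hk hg trivial (by simp [Val.fv]) ht_zzero,
    ite_clause_ty hk hh trivial (by simp [Val.fv]) (ht_zneg (.var' (if_pos rfl))), by simp⟩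

/-! ### Structural recursion -/

theorem not_recCallT_toTerm {f : ℕ} {p : Term} : ∀ v : Val, ¬ RecCallT f p v.toTerm
  | .unit, h => by cases h
  | .var _, h => by cases h
  | .inl v, h => by cases h; exact not_recCallT_toTerm v ‹_›
  | .inr v, h => by cases h; exact not_recCallT_toTerm v ‹_›
  | .fold v, h => by cases h; exact not_recCallT_toTerm v ‹_›
  | .pair v w, h => by
      cases h
      · exact not_recCallT_toTerm v ‹_›
      · exact not_recCallT_toTerm w ‹_›

theorem recCallT_let {f : ℕ} {p t : Term} {q : Pat} {w : Iso} {v : Val}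
    (h : RecCallT f p (.lett q (.app w v.toTerm) t)) :
    (w = .ivar f ∧ p = v.toTerm) ∨ RecCallI f p w ∨ RecCallT f p t := by
  cases h with
  | lett₁ h =>
    cases h with
    | here => exact .inl ⟨rfl, rfl⟩
    | appIso h => exact .inr (.inl h)
    | appArg h => exact (not_recCallT_toTerm v h).elim
  | lett₂ h => exact .inr (.inr h)

theorem recCallI_clauses {f : ℕ} {p : Term} {l : Clauses} (h : RecCallI f p (.clauses l)) :
    ∃ c ∈ l.toList, RecCallT f p c.2 := by
  cases h with
  | clauses h =>
    induction l using Clauses.rec (motive_1 := fun _ => True) (motive_2 := fun _ => True) with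
    | nil => cases h
    | cons v e r _ ih =>
      cases h with
      | head h => exact ⟨_, .head _, h⟩
      | tail h =>
        obtain ⟨c, hc, h⟩ := ih h
        exact ⟨c, .tail _ hc, h⟩
    | _ => trivial

theorem isosOf_ne_ivar {k : ℕ} (F : RPPx.RPP k) (x : ℕ) : isosOf F ≠ .ivar x := by
  intro h
  cases F
  case pre => rw [isosOf, succIso_inv] at h; exact Iso.noConfusion h
  all_goals exact Iso.noConfusion h

/-- No translated iso contains a free iso-variable, so none contains a recursive call. -/
theorem not_recCallI_isosOf {k : ℕ} (F : RPPx.RPP k) : ∀ p, ¬ RecCallI 0 p (isosOf F) := by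
  have base : ∀ (l : Clauses) (p : Term), (∀ c ∈ l.toList, ∃ v : Val, c.2 = v.toTerm) →
      ¬ RecCallI 0 p (.clauses l) := by
    intro l p hl h
    obtain ⟨c, hc, h⟩ := recCallI_clauses h
    obtain ⟨v, hv⟩ := hl c hc
    exact not_recCallT_toTerm v (hv ▸ h)
  induction F with
  | id => exact fun p => base _ p (by simp [Clauses.toList]; exact ⟨.var 0, rfl⟩)
  | suc => exact fun p => base _ p (by simp [Clauses.toList])
  | pre =>
    intro p
    rw [isosOf, succIso_inv]
    exact base _ p (by simp [Clauses.toList])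
  | sign => exact fun p => base _ p (by simp [Clauses.toList])
  | swap => exact fun p => base _ p (by simp [Clauses.toList])
  | comp f g hf hg =>
    intro p h
    obtain ⟨c, hc, h⟩ := recCallI_clauses h
    simp only [Clauses.toList, List.mem_singleton] at hc
    subst hc
    obtain ⟨h, -⟩ | h | h := recCallT_let h
    · exact isosOf_ne_ivar _ _ h
    · exact hf _ h
    obtain ⟨h, -⟩ | h | h := recCallT_let h
    · exact isosOf_ne_ivar _ _ h
    · exact hg _ h
    · exact not_recCallT_toTerm _ h
  | par f g hf hg =>
    intro p h
    obtain ⟨c, hc, h⟩ := recCallI_clauses h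
    simp only [Clauses.toList, List.mem_singleton] at hc
    subst hc
    obtain ⟨h, -⟩ | h | h := recCallT_let h
    · exact isosOf_ne_ivar _ _ h
    · exact hf _ h
    obtain ⟨h, -⟩ | h | h := recCallT_let h
    · exact isosOf_ne_ivar _ _ h
    · exact hg _ h
    · exact not_recCallT_toTerm _ h
  | it f hf =>
    intro p h
    obtain ⟨c, hc, h⟩ := recCallI_clauses h
    have haux : ∀ k p, ¬ RecCallI 0 p (auxIt k (isosOf f)) := fun k p h => by
      rw [auxIt_eq] at h
      cases h with
      | fixI _ h => exact h rfl
    have key : ∀ (k : ℕ) (q : Pat) (v u : Val) (p : Term),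
        ¬ RecCallT 0 p (.lett q (.app (auxIt k (isosOf f)) v.toTerm) u.toTerm) := by
      intro k q v u p h
      obtain ⟨h, -⟩ | h | h := recCallT_let h
      · exact Iso.noConfusion h
      · exact haux _ _ h
      · exact not_recCallT_toTerm _ h
    simp only [Clauses.toList, List.mem_cons, List.not_mem_nil, or_false] at hc
    rcases hc with rfl | rfl | rfl
    · exact not_recCallT_toTerm _ h
    · exact key _ _ _ _ _ h
    · exact key _ _ _ _ _ h
  | ite f g h' hf hg hh =>
    intro p h
    obtain ⟨c, hc, h⟩ := recCallI_clauses h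
    simp only [Clauses.toList, List.mem_cons, List.not_mem_nil, or_false] at hc
    rcases hc with rfl | rfl | rfl
    all_goals
      obtain ⟨h, -⟩ | h | h := recCallT_let h
      · exact isosOf_ne_ivar _ _ h
      · first | exact hf _ h | exact hg _ h | exact hh _ h
      · exact not_recCallT_toTerm _ h

theorem tuple_Zq {B : Ty} (hB : B.tuple = [B]) : ∀ k, (Zq k B).tuple = List.replicate k ZTy ++ [B]
  | 0 => hB
  | k + 1 => by rw [Zq_succ, Ty.tuple, tuple_Zq hB k]; rfl

theorem tuple_vtq {q : Val} (hq : q.tuple = [q]) :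
    ∀ k s, (vtq s k q).tuple = (List.range' s k).map .var ++ [q]
  | 0, _ => hq
  | k + 1, s => by rw [vtq_succ, Val.tuple, tuple_vtq hq k]; rfl

theorem tupleVars_vtq (x : ℕ) :
    ∀ k s, (vtq s k (.var x)).toTerm.tupleVars = some (List.range' s k ++ [x])
  | 0, _ => rfl
  | k + 1, s => by rw [vtq_succ, Val.toTerm, Val.toTerm, Term.tupleVars, tupleVars_vtq x k]; rfl

/-- The only recursive call of `auxIt` is on the predecessor of its last argument. -/
theorem aux_structRec (k : ℕ) {w : Iso} (hw : ∀ p, ¬ RecCallI 0 p w) (hw' : w ≠ .ivar 0) :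
    StructRecClauses 0 (auxBody k w (.ivar 0)) (Zq k nposTy) := by
  have ht : (Zq k nposTy).tuple = _ := tuple_Zq rfl k
  have hlast : ∀ q : Val, q.tuple = [q] → (vtq 0 k q).tuple[k]? = some q := fun q hq => by
    rw [tuple_vtq hq]; simp
  refine ⟨k, .sum .one (.tvar 0), by rw [ht]; simp [nposTy], ?_⟩
  intro c hc
  simp only [auxBody, Clauses.toList, List.mem_cons, List.not_mem_nil, or_false] at hc
  rcases hc with rfl | rfl
  · refine ⟨_, hlast _ rfl, .inl ⟨rfl, fun p h => ?_⟩⟩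
    obtain ⟨h, -⟩ | h | h := recCallT_let h
    · exact hw' h
    · exact hw _ h
    · exact not_recCallT_toTerm _ h
  · refine ⟨_, hlast _ rfl, .inr fun p h => ?_⟩
    obtain ⟨h, -⟩ | h | h := recCallT_let h
    · exact (hw' h).elim
    · exact (hw _ h).elim
    obtain ⟨-, rfl⟩ | h | h := recCallT_let h
    · refine ⟨_, tupleVars_vtq _ _ _, by simp [ht], k, by simp, ?_, by simp⟩
      exact .fold (.inr (.refl _))
    · cases h
    · exact (not_recCallT_toTerm _ h).elim

theorem aux_ty {k : ℕ} (hk : 0 < k) {w : Iso} (hw : IsoTy none w (Zpow k) (Zpow k))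
    (hr : ∀ p, ¬ RecCallI 0 p w) (hr' : w ≠ .ivar 0) :
    IsoTy none (auxIt k w) (Zq k nposTy) (Zq k nposTy) := by
  rw [auxIt_eq]
  refine .fixI none ?_ fun l hl => Iso.clauses.inj hl ▸ aux_structRec k hr hr'
  have h : ∀ x, OD nposTy {q | q ∈ [.fold (.inl .unit), .fold (.inr (.var x))]} := fun x =>
    (od_npos x).congr fun v => by simp
  refine .of_outputs [vtq k k (.fold (.inl .unit)),
      vtq (2 * k + 1) k (.fold (.inr (.var (3 * k + 1))))] ?_
    (od_family (h k) k (fun _ => 0) (by simp [Clauses.toList, auxBody]))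
    (by simp [Clauses.toList, Term.valOf, valOf_toTerm, auxBody])
    (od_family (h (3 * k + 1)) k (fun q => if q = .fold (.inl .unit) then k else 2 * k + 1)
      (by simp))
  simp only [auxBody, Clauses.toList, List.forall_mem_cons]
  let T : ℕ → Ty := fun x => if x = k ∨ x = 3 * k + 1 then nposTy else ZTy
  have hT : ∀ {x}, x ≠ k → x ≠ 3 * k + 1 → T x = ZTy := fun h₁ h₂ => if_neg (by tauto)
  have hk₁ : HT T (.var k) nposTy := .var' (if_pos (.inl rfl))
  have hk₂ : HT T (.var (3 * k + 1)) nposTy := .var' (if_pos (.inr rfl))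
  have hp := fun s => pt'_toVal s hk
  refine ⟨?_, ?_, by simp⟩
  · refine .mk (fun _ => ZTy) (vtq_linear trivial (by simp [Val.fv]))
      (vtq_ht ht_one _ _ fun _ _ _ => rfl) ?_
    refine let_ty (call_ty hw) (vt_linear _ _) (vt_ht hk fun _ _ _ => rfl)
      (hp _ ▸ vt_linear _ _) (hp _ ▸ vt_ht hk fun _ _ _ => rfl) ?_ ?_ ?_
    · intro x; simp only [mem_vt_fv, mem_vtq_fv]; omega
    · rw [hp, Finset.disjoint_left]
      intro x; simp only [mem_vt_fv, mem_vtq_fv, Finset.mem_sdiff, Val.fv]; simp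
    rw [hp]
    refine value_ty (vtq_linear trivial (by simp [Val.fv]))
      (vtq_ht ht_one _ _ fun _ _ _ => rfl) ?_
    ext x
    simp only [mem_vt_fv, mem_vtq_fv, Finset.mem_union, Finset.mem_sdiff, Val.fv]
    simp
  · refine .mk T (vtq_linear trivial (by simp [Val.fv]))
      (vtq_ht (ht_succ hk₁) _ _ fun x _ h => hT (by omega) (by omega)) ?_
    refine let_ty (call_ty hw) (vt_linear _ _) (vt_ht hk fun x _ h => hT (by omega) (by omega))
      (hp _ ▸ vt_linear _ _) (hp _ ▸ vt_ht hk fun x _ h => hT (by omega) (by omega)) ?_ ?_ ?_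
    · intro x; simp only [mem_vt_fv, mem_vtq_fv]; omega
    · rw [hp, Finset.disjoint_left]
      intro x
      simp only [mem_vt_fv, mem_vtq_fv, Finset.mem_sdiff, Val.fv, Finset.mem_singleton]; omega
    rw [hp]
    refine let_ty (A := Zq k nposTy) (B := Zq k nposTy)
      (fun Γ t ht => .appV (.ivar 0 _ _) ht) (vtq_var_linear (by omega))
      (vtq_ht hk₁ _ _ fun x _ h => hT (by omega) (by omega)) ?_ ?_ ?_ ?_ ?_
    · rw [patOfVars_snoc_toVal]; exact vtq_var_linear (by omega)
    · rw [patOfVars_snoc_toVal]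
      exact vtq_ht hk₂ _ _ fun x _ h => hT (by omega) (by omega)
    · intro x
      simp only [mem_vt_fv, mem_vtq_fv, Finset.mem_union, Finset.mem_sdiff, Val.fv,
        Finset.mem_singleton]; omega
    · rw [patOfVars_snoc_toVal, Finset.disjoint_left]
      intro x
      simp only [mem_vt_fv, mem_vtq_fv, Finset.mem_union, Finset.mem_sdiff, Val.fv,
        Finset.mem_singleton]; omega
    refine value_ty (vtq_linear trivial (by simp [Val.fv]; omega))
      (vtq_ht (ht_succ hk₂) _ _ fun x _ h => hT (by omega) (by omega)) ?_
    rw [patOfVars_snoc_toVal]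
    ext x
    simp only [mem_vt_fv, mem_vtq_fv, Finset.mem_union, Finset.mem_sdiff, Val.fv,
        Finset.mem_singleton]; omega

theorem it_clause_ty {k : ℕ} {w : Iso} (hw : IsoTy none w (Zq k nposTy) (Zq k nposTy))
    {q q' : Val} (hq : q.Linear) (hqv : q.fv = {k}) (hq' : q'.Linear)
    (hqv' : q'.fv = {2 * k + 1}) (hqT : ∀ T, HT T (.var k) nposTy → HT T q ZTy)
    (hqT' : ∀ T, HT T (.var (2 * k + 1)) nposTy → HT T q' ZTy) :
    ClauseTy none (vtq 0 k q, .lett (patOfVars (List.range' (k + 1) k ++ [2 * k + 1]))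
        (.app w (vtq 0 k (.var k)).toTerm) (vtq (k + 1) k q').toTerm)
      (Zq k ZTy) (Zq k ZTy) := by
  let T : ℕ → Ty := fun x => if x = k ∨ x = 2 * k + 1 then nposTy else ZTy
  have hT : ∀ {x}, x ≠ k → x ≠ 2 * k + 1 → T x = ZTy := fun h₁ h₂ => if_neg (by tauto)
  have hk₁ : HT T (.var k) nposTy := .var' (if_pos (.inl rfl))
  have hk₂ : HT T (.var (2 * k + 1)) nposTy := .var' (if_pos (.inr rfl))
  refine .mk T (vtq_linear hq (by simp [hqv]))
    (vtq_ht (hqT T hk₁) _ _ fun x _ h => hT (by omega) (by omega)) ?_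
  refine let_ty (call_ty hw) (vtq_var_linear (by omega))
    (vtq_ht hk₁ _ _ fun x _ h => hT (by omega) (by omega)) ?_ ?_ ?_ ?_ ?_
  · rw [patOfVars_snoc_toVal]; exact vtq_var_linear (by omega)
  · rw [patOfVars_snoc_toVal]
    exact vtq_ht hk₂ _ _ fun x _ h => hT (by omega) (by omega)
  · intro x
    simp only [mem_vtq_fv, hqv, Val.fv]; exact id
  · rw [patOfVars_snoc_toVal, Finset.disjoint_left]
    intro x
    simp only [mem_vtq_fv, hqv, Finset.mem_sdiff, Val.fv, Finset.mem_singleton]; omega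
  refine value_ty (vtq_linear hq' (by simp [hqv']; omega))
    (vtq_ht (hqT' T hk₂) _ _ fun x _ h => hT (by omega) (by omega)) ?_
  rw [patOfVars_snoc_toVal]
  ext x
  simp only [mem_vtq_fv, hqv, hqv', Finset.mem_union, Finset.mem_sdiff, Val.fv,
    Finset.mem_singleton]; omega

theorem it_ty {k : ℕ} {w : Iso} (hw : IsoTy none (auxIt k w) (Zq k nposTy) (Zq k nposTy)) :
    IsoTy none (itIso k w) (Zpow (k + 1)) (Zpow (k + 1)) := by
  rw [itIso_eq, Zpow_succ]
  have h : ∀ x, OD ZTy {q | q ∈ [.inl .unit, .inr (.inl (.var x)), .inr (.inr (.var x))]} :=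
    fun x => (od_sign_var x x).congr fun v => by simp
  refine .of_outputs [vtq 0 k (.inl .unit), vtq (k + 1) k (.inr (.inl (.var (2 * k + 1)))),
      vtq (k + 1) k (.inr (.inr (.var (2 * k + 1))))] ?_
    (od_family (h k) k (fun _ => 0) (by simp [Clauses.toList]))
    (by simp [Clauses.toList, Term.valOf, valOf_toTerm])
    (od_family (h (2 * k + 1)) k (fun q => if q = .inl .unit then 0 else k + 1) (by simp))
  simp only [Clauses.toList, List.forall_mem_cons]
  refine ⟨?_, it_clause_ty hw trivial rfl trivial rfl (fun _ => ht_zpos) (fun _ => ht_zpos),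
    it_clause_ty hw trivial rfl trivial rfl (fun _ => ht_zneg) (fun _ => ht_zneg), by simp⟩
  have hl : (vtq 0 k (.inl .unit)).Linear := vtq_linear trivial (by simp [Val.fv])
  have ht : HT (fun _ => ZTy) (vtq 0 k (.inl .unit)) (Zq k ZTy) :=
    vtq_ht ht_zzero _ _ fun _ _ _ => rfl
  exact .value _ hl ht hl ht rfl

theorem isosOf_ty {k : ℕ} (f : RPPx.RPP k) : IsoTy none (isosOf f) (Zpow k) (Zpow k) := by
  induction f with
  | id => exact id_ty
  | suc => exact suc_ty
  | pre => exact pre_ty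
  | sign => exact sign_ty
  | swap => exact swap_ty
  | comp f g hf hg => exact comp_ty (RPP_pos f) hf hg
  | par f g hf hg => exact par_ty (RPP_pos f) (RPP_pos g) hf hg
  | it f hf => exact it_ty (aux_ty (RPP_pos f) hf (not_recCallI_isosOf f) (isosOf_ne_ivar f 0))
  | ite f g h hf hg hh => exact ite_ty (RPP_pos f) hf hg hh

end LinRev

namespace RPPx

/-! ### Wire permutations -/

/-- `F` is the semantics of an RPP function. -/
def Rep {k : ℕ} (F : (Fin k → ℤ) → (Fin k → ℤ)) : Prop := ∃ f : RPP k, eval f = F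

theorem Rep.comp {k : ℕ} {F G : (Fin k → ℤ) → (Fin k → ℤ)} (hF : Rep F) (hG : Rep G) :
    Rep (fun v => G (F v)) := by
  obtain ⟨f, rfl⟩ := hF
  obtain ⟨g, rfl⟩ := hG
  exact ⟨.comp f g, rfl⟩

/-- An identity wire can be added on the right, as a selection with three equal branches. -/
theorem Rep.snoc {k : ℕ} {F : (Fin k → ℤ) → (Fin k → ℤ)} (hF : Rep F) :
    Rep (fun v : Fin (k + 1) → ℤ => Fin.snoc (F (Fin.init v)) (v (Fin.last k))) := by
  obtain ⟨f, rfl⟩ := hF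
  refine ⟨.ite f f f, ?_⟩
  funext v
  simp [eval]

theorem rep_id : ∀ k : ℕ, Rep (fun v : Fin (k + 1) → ℤ => v)
  | 0 => ⟨.id, rfl⟩
  | k + 1 => by simpa [Fin.snoc_init_self] using (rep_id k).snoc

theorem rep_swap_adjacent : ∀ {n : ℕ} (i : Fin n),
    Rep (fun v : Fin (n + 1) → ℤ => v ∘ Equiv.swap i.castSucc i.succ)
  | n + 1, i => by
    refine Fin.lastCases ?_ (fun i => ?_) i
    · cases n with
      | zero =>
        refine ⟨.swap, ?_⟩
        funext v i
        fin_cases i <;> simp [eval]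
      | succ n =>
        obtain ⟨f, hf⟩ := rep_id n
        refine ⟨(RPP.par f RPP.swap : RPP (n + 1 + 2)), ?_⟩
        funext v i
        simp only [eval, hf, Function.comp_apply]
        refine Fin.addCases (m := n + 1) (n := 2) (fun j => ?_) (fun j => ?_) i
        · rw [Fin.append_left, Equiv.swap_apply_of_ne_of_ne]
          · rfl
          · intro h; have := congrArg Fin.val h; simp at this; omega
          · intro h; have := congrArg Fin.val h; simp at this; omega
        · rw [Fin.append_right]
          fin_cases j
          · have : (Fin.natAdd (n + 1) (0 : Fin 2)) = (Fin.last (n + 1)).castSucc := by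
              ext; simp
            dsimp only
            erw [this, Equiv.swap_apply_left]
            congr 1
          · have : (Fin.natAdd (n + 1) (1 : Fin 2)) = (Fin.last (n + 1)).succ := by
              ext; simp
            dsimp only
            erw [this, Equiv.swap_apply_right]
            congr 1
    · convert (rep_swap_adjacent i).snoc using 1
      funext v j
      refine Fin.lastCases ?_ (fun j => ?_) j
      · rw [Fin.snoc_last, Function.comp_apply, Equiv.swap_apply_of_ne_of_ne]
        · exact (Fin.castSucc_lt_last _).ne'
        · intro h; have := congrArg Fin.val h; simp at this; omega
      · rw [Fin.snoc_castSucc, Function.comp_apply, Function.comp_apply, Fin.init,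
          Fin.succ_castSucc]
        congr 1
        exact (Fin.castSucc_injective _).map_swap _ _ _ |>.symm

/-- Every permutation of the wires is an RPP function, since adjacent transpositions generate. -/
theorem rep_perm {n : ℕ} (σ : Equiv.Perm (Fin (n + 1))) : Rep (fun v : Fin (n + 1) → ℤ => v ∘ σ) := by
  have h : σ ∈ Submonoid.closure
      (Set.range fun i : Fin n => Equiv.swap i.castSucc i.succ) := by
    rw [Equiv.Perm.mclosure_swap_castSucc_succ]; trivial
  induction h using Submonoid.closure_induction with
  | mem σ h => obtain ⟨i, rfl⟩ := h; exact rep_swap_adjacent i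
  | one => exact rep_id n
  | mul σ τ _ _ hσ hτ => exact hσ.comp hτ

theorem rep_update {F : ℤ → ℤ} (hF : Rep fun (v : Fin 1 → ℤ) i => F (v i)) :
    ∀ n : ℕ, Rep (fun v : Fin (n + 1) → ℤ => Function.update v 0 (F (v 0)))
  | 0 => by
    convert hF using 1
    funext v i
    obtain rfl : i = 0 := Fin.fin_one_eq_zero i
    exact Function.update_self _ _ _
  | n + 1 => by
    convert (rep_update hF n).snoc using 1
    funext v j
    refine Fin.lastCases ?_ (fun j => ?_) j
    · rw [Fin.snoc_last, Function.update_of_ne (Fin.last_pos).ne']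
    · rw [Fin.snoc_castSucc]
      by_cases hj : j = 0
      · subst hj; simp [Fin.init]
      · rw [Function.update_of_ne hj, Function.update_of_ne]
        · rfl
        · simpa using hj

/-! ### Register programs -/

/-- Reversible register programs over registers named by natural numbers. There is no empty
program, as RPP has no function of arity `0`. -/
inductive Prog : Type
  | inc (r : ℕ)
  | dec (r : ℕ)
  | seq (P Q : Prog)
  | loop (r : ℕ) (P : Prog)
  | ite (r : ℕ) (P Q R : Prog)

namespace Prog

/-- The effect of a program on the contents of the registers. `loop r P` repeats `P` as often as
the absolute value of register `r`; `ite r P Q R` branches on `r` being positive, zero or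
negative. -/
def run : Prog → (ℕ → ℤ) → (ℕ → ℤ)
  | inc r => fun s => Function.update s r (s r + 1)
  | dec r => fun s => Function.update s r (s r - 1)
  | seq P Q => fun s => run Q (run P s)
  | loop r P => fun s => (run P)^[(s r).natAbs] s
  | ite r P Q R => fun s => if 0 < s r then run P s else if s r = 0 then run Q s else run R s

/-- The registers mentioned by a program. -/
def vars : Prog → Finset ℕ
  | inc r => {r}
  | dec r => {r}
  | seq P Q => vars P ∪ vars Q
  | loop r P => insert r (vars P)
  | ite r P Q R => insert r (vars P ∪ vars Q ∪ vars R)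

/-- Control registers are not touched by the programs they control. This makes programs
reversible. -/
def WF : Prog → Prop
  | inc _ => True
  | dec _ => True
  | seq P Q => WF P ∧ WF Q
  | loop r P => r ∉ vars P ∧ WF P
  | ite r P Q R => r ∉ vars P ∧ r ∉ vars Q ∧ r ∉ vars R ∧ WF P ∧ WF Q ∧ WF R

/-- The inverse program. -/
def inv : Prog → Prog
  | inc r => dec r
  | dec r => inc r
  | seq P Q => seq (inv Q) (inv P)
  | loop r P => loop r (inv P)
  | ite r P Q R => ite r (inv P) (inv Q) (inv R)

theorem vars_inv (P : Prog) : P.inv.vars = P.vars := by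
  induction P <;> simp_all [inv, vars, Finset.union_comm]

theorem WF.inv {P : Prog} (h : P.WF) : P.inv.WF := by
  induction P <;> simp_all [Prog.inv, WF, vars_inv]

theorem iterate_frame {F : (ℕ → ℤ) → (ℕ → ℤ)} {r : ℕ} (h : ∀ s, F s r = s r) :
    ∀ (n : ℕ) (s : ℕ → ℤ), F^[n] s r = s r
  | 0, _ => rfl
  | n + 1, s => by rw [Function.iterate_succ_apply, iterate_frame h n, h]

theorem run_frame {P : Prog} {r : ℕ} (h : r ∉ P.vars) (s : ℕ → ℤ) : P.run s r = s r := by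
  induction P generalizing s with
  | inc x => simp_all [run, vars]
  | dec x => simp_all [run, vars]
  | seq P Q hP hQ => simp_all [run, vars]
  | loop x P hP =>
    simp only [vars, Finset.mem_insert, not_or] at h
    exact iterate_frame (hP h.2) _ _
  | ite x P Q R hP hQ hR =>
    simp only [vars, Finset.mem_insert, Finset.mem_union, not_or] at h
    simp only [run]
    split_ifs
    · exact hP h.2.1.1 s
    · exact hQ h.2.1.2 s
    · exact hR h.2.2 s

/-- A program does not notice the content of a register it does not mention. -/
theorem run_update {P : Prog} {r : ℕ} (h : r ∉ P.vars) (s : ℕ → ℤ) (c : ℤ) :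
    P.run (Function.update s r c) = Function.update (P.run s) r c := by
  induction P generalizing s with
  | inc x =>
    simp only [vars, Finset.mem_singleton] at h
    simp only [run, Function.update_of_ne (Ne.symm h)]
    exact Function.update_comm h _ _ _
  | dec x =>
    simp only [vars, Finset.mem_singleton] at h
    simp only [run, Function.update_of_ne (Ne.symm h)]
    exact Function.update_comm h _ _ _
  | seq P Q hP hQ => simp_all [run, vars]
  | loop x P hP =>
    simp only [vars, Finset.mem_insert, not_or] at h
    have hs : Function.Semiconj (fun s => Function.update s r c) P.run P.run :=
      fun s => (hP h.2 s).symm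
    simp only [run, Function.update_of_ne (Ne.symm h.1)]
    exact ((hs.iterate_right _).eq s).symm
  | ite x P Q R hP hQ hR =>
    simp only [vars, Finset.mem_insert, Finset.mem_union, not_or] at h
    simp only [run, Function.update_of_ne (Ne.symm h.1), hP h.2.1.1, hQ h.2.1.2, hR h.2.2]
    split_ifs <;> rfl

theorem run_inv_run {P : Prog} (h : P.WF) (s : ℕ → ℤ) : P.inv.run (P.run s) = s := by
  induction P generalizing s with
  | inc x => simp [run, inv]
  | dec x => simp [run, inv]
  | seq P Q hP hQ => simp [run, inv, hP h.1, hQ h.2]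
  | loop x P hP =>
    have hx : (loop x P).run s x = s x := iterate_frame (fun s => run_frame h.1 s) _ _
    change P.inv.run^[((loop x P).run s x).natAbs] ((loop x P).run s) = s
    rw [hx]
    exact (Function.LeftInverse.iterate (hP h.2) _) s
  | ite x P Q R hP hQ hR =>
    obtain ⟨h₁, h₂, h₃, h₄, h₅, h₆⟩ := h
    simp only [run, inv]
    rcases lt_trichotomy (s x) 0 with hx | hx | hx
    · simp [hx.not_gt, hx.ne, run_frame h₃, hR h₆]
    · simp [hx, run_frame h₂, hQ h₅]
    · simp [hx, run_frame h₁, hP h₄]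

/-! ### Programs as RPP functions -/

/-- `P` is an RPP function on the registers listed by `e`. -/
def Comp {k : ℕ} (P : Prog) (e : Fin k → ℕ) : Prop :=
  ∃ f : RPP k, ∀ s : ℕ → ℤ, eval f (s ∘ e) = P.run s ∘ e

theorem Comp.of_perm {n : ℕ} {P : Prog} {e : Fin (n + 1) → ℕ} (σ : Equiv.Perm (Fin (n + 1)))
    (h : Comp P (e ∘ σ)) : Comp P e := by
  obtain ⟨f, hf⟩ := h
  obtain ⟨g, hg⟩ := ((rep_perm σ).comp ⟨f, rfl⟩).comp (rep_perm σ⁻¹)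
  refine ⟨g, fun s => ?_⟩
  rw [hg]
  simp only [Function.comp_assoc, hf]
  funext i
  simp

/-- The wires can be permuted so that a given register sits at a given position. -/
theorem Comp.of_move {n : ℕ} {P : Prog} {e : Fin (n + 1) → ℕ} (he : Function.Injective e) {r : ℕ}
    (hr : ∃ i, e i = r) (j : Fin (n + 1))
    (h : ∀ e' : Fin (n + 1) → ℕ, Function.Injective e' → Set.range e' = Set.range e → e' j = r →
      Comp P e') : Comp P e := by
  obtain ⟨i, rfl⟩ := hr
  refine .of_perm (Equiv.swap i j) (h _ (he.comp (Equiv.injective _)) ?_ (by simp))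
  rw [Set.range_comp, (Equiv.surjective _).range_eq, Set.image_univ]

theorem comp_update {k : ℕ} {e : Fin k → ℕ} (he : Function.Injective e) {r : ℕ}
    (hr : ∃ i, e i = r) {P : Prog} {F : ℤ → ℤ} (hF : Rep fun (v : Fin 1 → ℤ) i => F (v i))
    (hP : ∀ s, P.run s = Function.update s r (F (s r))) : Comp P e := by
  cases k with
  | zero => exact hr.elim fun i _ => i.elim0
  | succ n =>
    refine .of_move he hr 0 fun e' he' _ h0 => ?_
    obtain ⟨f, hf⟩ := rep_update hF n
    refine ⟨f, fun s => ?_⟩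
    rw [hf, hP, ← h0, Function.update_comp_eq_of_injective _ he']
    rfl

theorem snoc_comp {n : ℕ} {e : Fin (n + 1) → ℕ} {s : ℕ → ℤ} {v : Fin n → ℤ} {c : ℤ}
    (hv : v = s ∘ e ∘ Fin.castSucc) (hc : c = s (e (Fin.last n))) :
    (Fin.snoc v c : Fin (n + 1) → ℤ) = s ∘ e := by
  subst hv hc
  exact Fin.snoc_init_self (s ∘ e)

/-- Well-formed programs are RPP functions, on any list of registers containing theirs. The
control register of a loop or selection is brought to the last wire. -/
theorem comp_of_wf {P : Prog} (hP : P.WF) : ∀ {k : ℕ} {e : Fin k → ℕ}, Function.Injective e →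
    (∀ r ∈ P.vars, ∃ i, e i = r) → Comp P e := by
  have restrict : ∀ {n : ℕ} {e e' : Fin (n + 1) → ℕ} {Q : Prog} {r : ℕ},
      Set.range e' = Set.range e → e' (Fin.last n) = r → r ∉ Q.vars →
      (∀ x ∈ Q.vars, ∃ i, e i = x) → ∀ x ∈ Q.vars, ∃ i, (e' ∘ Fin.castSucc) i = x := by
    intro n e e' Q r hr hl hQ h x hx
    obtain ⟨i, hi⟩ : x ∈ Set.range e' := hr ▸ h x hx
    induction i using Fin.lastCases with
    | last => exact (hQ (by rwa [← hl, hi])).elim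
    | cast i => exact ⟨i, hi⟩
  induction P with
  | inc r =>
    intro k e he hr
    exact comp_update he (hr r (by simp [vars])) (F := fun z => z + 1) ⟨.suc, rfl⟩ fun s => rfl
  | dec r =>
    intro k e he hr
    exact comp_update he (hr r (by simp [vars])) (F := fun z => z - 1) ⟨.pre, rfl⟩ fun s => rfl
  | seq P Q ihP ihQ =>
    intro k e he hr
    obtain ⟨f, hf⟩ := ihP hP.1 he fun r h => hr r (by simp [vars, h])
    obtain ⟨g, hg⟩ := ihQ hP.2 he fun r h => hr r (by simp [vars, h])
    exact ⟨.comp f g, fun s => by simp only [eval, hf, hg, run]⟩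
  | loop r P ih =>
    intro k e he hr
    have hre := hr r (by simp [vars])
    cases k with
    | zero => exact hre.elim fun i _ => i.elim0
    | succ n =>
      refine .of_move he hre (Fin.last n) fun e' he' hrange hl => ?_
      obtain ⟨f, hf⟩ := ih hP.2 (he'.comp (Fin.castSucc_injective n))
        (restrict hrange hl hP.1 fun x h => hr x (by simp [vars, h]))
      refine ⟨.it f, fun s => ?_⟩
      have hs : Function.Semiconj (fun s : ℕ → ℤ => s ∘ e' ∘ Fin.castSucc) P.run (eval f) :=
        fun s => (hf s).symm
      refine snoc_comp ?_ ?_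
      · rw [Function.comp_apply, hl]
        exact ((hs.iterate_right _).eq s).symm
      · rw [hl]
        exact (congrArg s hl).trans (iterate_frame (fun s => run_frame hP.1 s) _ _).symm
  | ite r P Q R ihP ihQ ihR =>
    intro k e he hr
    have hre := hr r (by simp [vars])
    obtain ⟨h₁, h₂, h₃, h₄, h₅, h₆⟩ := hP
    cases k with
    | zero => exact hre.elim fun i _ => i.elim0
    | succ n =>
      refine .of_move he hre (Fin.last n) fun e' he' hrange hl => ?_
      have hc := he'.comp (Fin.castSucc_injective n)
      obtain ⟨f, hf⟩ := ihP h₄ hc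
        (restrict hrange hl h₁ fun x h => hr x (by simp [vars, h]))
      obtain ⟨g, hg⟩ := ihQ h₅ hc
        (restrict hrange hl h₂ fun x h => hr x (by simp [vars, h]))
      obtain ⟨h, hh⟩ := ihR h₆ hc
        (restrict hrange hl h₃ fun x h => hr x (by simp [vars, h]))
      refine ⟨.ite f g h, fun s => ?_⟩
      refine snoc_comp ?_ ?_
      · have hi : Fin.init (s ∘ e') = s ∘ e' ∘ Fin.castSucc := rfl
        rw [Function.comp_apply, hl, hi]
        simp only [run]
        split_ifs
        · exact hf s
        · exact hg s
        · exact hh s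
      · rw [Function.comp_apply, hl]
        simp only [run]
        split_ifs
        · exact (run_frame h₁ s).symm
        · exact (run_frame h₂ s).symm
        · exact (run_frame h₃ s).symm

end Prog

end RPPx

namespace RPPx.Prog

open Function (update)

/-! ### Building blocks -/

theorem run_seq (P Q : Prog) (s : ℕ → ℤ) : (seq P Q).run s = Q.run (P.run s) := rfl

theorem run_loop {r n : ℕ} {s : ℕ → ℤ} (h : s r = n) (P : Prog) :
    (loop r P).run s = P.run^[n] s := by
  change P.run^[(s r).natAbs] s = _
  rw [h, Int.natAbs_natCast]

theorem run_ite_pos {r : ℕ} {s : ℕ → ℤ} (h : 0 < s r) (P Q R : Prog) :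
    (ite r P Q R).run s = P.run s := if_pos h

theorem run_ite_zero {r : ℕ} {s : ℕ → ℤ} (h : s r = 0) (P Q R : Prog) :
    (ite r P Q R).run s = Q.run s := by simp [run, h]

/-- Conjugation: prepare with `P`, act with `Q` on registers foreign to `P`, and undo `P`. -/
theorem run_sandwich {P Q : Prog} (hP : P.WF) {y : ℕ} (hy : y ∉ P.vars) {s : ℕ → ℤ} {c : ℤ}
    (hQ : Q.run (P.run s) = update (P.run s) y c) :
    (seq P (seq Q P.inv)).run s = update s y c := by
  rw [run_seq, run_seq, hQ, run_update (by rwa [vars_inv]), run_inv_run hP]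

/-- Add the absolute value of register `a` to register `b`. -/
def add (a b : ℕ) : Prog := loop a (inc b)

/-- Subtract the absolute value of register `a` from register `b`. -/
def sub (a b : ℕ) : Prog := loop a (dec b)

theorem iterate_inc (b n : ℕ) (s : ℕ → ℤ) : (inc b).run^[n] s = update s b (s b + n) := by
  induction n with
  | zero => simp
  | succ n ih =>
    rw [Function.iterate_succ_apply', ih]
    simp [run, add_assoc]

theorem iterate_dec (b n : ℕ) (s : ℕ → ℤ) : (dec b).run^[n] s = update s b (s b - n) := by
  induction n with
  | zero => simp
  | succ n ih =>
    rw [Function.iterate_succ_apply', ih]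
    simp [run, sub_sub]

theorem run_add {a b n : ℕ} {s : ℕ → ℤ} (h : s a = n) :
    (add a b).run s = update s b (s b + n) := by
  rw [add, run_loop h, iterate_inc]

theorem run_sub {a b n : ℕ} {s : ℕ → ℤ} (h : s a = n) :
    (sub a b).run s = update s b (s b - n) := by
  rw [sub, run_loop h, iterate_dec]

/-- A program without effect. -/
def skip (r : ℕ) : Prog := seq (inc r) (dec r)

@[simp] theorem run_skip (r : ℕ) (s : ℕ → ℤ) : (skip r).run s = s := by simp [skip, run]

/-! ### A reversible stack -/

/-- One step along the antidiagonals of the quadrant. Its orbit from `(0, 0)` is a bijection of `ℕ`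
with `ℕ × ℕ`, which is inverted step by step to code a pair by one number. -/
def walk : ℕ × ℕ → ℕ × ℕ
  | (0, b) => (b + 1, 0)
  | (a + 1, b) => (a, b + 1)

/-- The number of steps leading from `(0, 0)` to `(a, b)`. -/
def code (a b : ℕ) : ℕ := (a + b + 1).choose 2 + b

theorem walk_diag (c d : ℕ) : ∀ j, walk^[j] (c + j, d) = (c, d + j)
  | 0 => rfl
  | j + 1 => by
    rw [Function.iterate_succ_apply, ← add_assoc, walk, walk_diag]
    rw [add_right_comm, add_assoc]

theorem walk_start : ∀ c : ℕ, walk^[(c + 1).choose 2] (0, 0) = (c, 0)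
  | 0 => rfl
  | c + 1 => by
    have h : (c + 1 + 1).choose 2 = 1 + (c + (c + 1).choose 2) := by
      have := Nat.choose_succ_succ' (c + 1) 1
      norm_num at this ⊢
      omega
    rw [h, Function.iterate_add_apply, Function.iterate_add_apply, walk_start c]
    have := walk_diag 0 0 c
    rw [zero_add] at this
    rw [this]
    simp [walk]

theorem walk_code (a b : ℕ) : walk^[code a b] (0, 0) = (a, b) := by
  rw [code, add_comm, Function.iterate_add_apply, walk_start, walk_diag]
  simp

/-- A step of `walk` on the registers `a`, `b`, with a flag `c` for the case that `a` is empty;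
afterwards the case is recognized by `b` being empty, which clears the flag. -/
def walkP (a b c : ℕ) : Prog :=
  seq (ite a (skip c) (inc c) (skip c))
    (seq (ite c (seq (add b a) (seq (sub a b) (inc a))) (seq (dec a) (inc b)) (skip a))
      (ite b (skip c) (dec c) (skip c)))

/-- The state `s` with a pair stored in the registers `a` and `b`. -/
def put (a b : ℕ) (s : ℕ → ℤ) (x : ℕ × ℕ) : ℕ → ℤ := update (update s a x.1) b x.2

theorem run_walkP {a b c : ℕ} (hab : a ≠ b) (hac : a ≠ c) (hbc : b ≠ c) {s : ℕ → ℤ} (hs : s c = 0)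
    (x : ℕ × ℕ) : (walkP a b c).run (put a b s x) = put a b s (walk x) := by
  obtain ⟨_ | m, n⟩ := x
  · rw [walkP, run_seq, run_seq, run_ite_zero (r := a) (by simp [put, hab]),
      run_ite_pos (r := c) (by simp [put, run, hbc.symm, hac.symm, hs]),
      run_seq, run_seq, run_add (n := n) (by simp [put, run, hbc]),
      run_sub (n := n) (by simp [put, run, hab, hac]), run_ite_zero (r := b)]
    · funext r
      simp only [put, run, walk, Function.update_apply]
      grind
    · simp [put, run, hab, hab.symm, hbc]
  · rw [walkP, run_seq, run_seq, run_ite_pos (r := a) (by simp [put, hab]), run_skip,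
      run_ite_zero (r := c) (by simp [put, hac.symm, hbc.symm, hs]), run_seq,
      run_ite_pos (r := b), run_skip]
    · funext r
      simp only [put, run, walk, Function.update_apply]
      grind
    · simp [put, run, hab.symm]

theorem wf_walkP {a b c : ℕ} (hab : a ≠ b) (hac : a ≠ c) (hbc : b ≠ c) : (walkP a b c).WF := by
  simp [walkP, WF, skip, add, sub, vars, hab, hac, hbc, hab.symm, hac.symm, hbc.symm]

/-- Replace the contents `a`, `b` of the registers `m`, `m + 1` by `0`, `code a b`. This computes
`code a b` in register `m + 4`, walks `(a, b)` back to `(0, 0)`, and moves the code. -/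
def push (m : ℕ) : Prog :=
  seq (seq (add m (m + 2)) (seq (add (m + 1) (m + 2))
    (seq (loop (m + 2) (seq (inc (m + 3)) (add (m + 3) (m + 4)))) (seq (add (m + 1) (m + 4))
      (seq (sub (m + 2) (m + 3)) (seq (sub m (m + 2)) (sub (m + 1) (m + 2))))))))
  (seq (loop (m + 4) (walkP m (m + 1) (m + 5)).inv)
    (seq (add (m + 4) (m + 1)) (sub (m + 1) (m + 4))))

theorem wf_push (m : ℕ) : (push m).WF := by
  have h : (walkP m (m + 1) (m + 5)).WF := wf_walkP (by omega) (by omega) (by omega)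
  simp [push, WF, add, sub, vars, vars_inv, h.inv]
  simp [walkP, skip, vars, add, sub]

theorem vars_push {m r : ℕ} (h : r ∈ (push m).vars) : m ≤ r ∧ r ≤ m + 5 := by
  simp [push, vars, add, sub, vars_inv, walkP, skip] at h
  omega

/-- Summing up the counter yields the triangular numbers. -/
theorem iterate_triangle {q p : ℕ} (hqp : q ≠ p) {s : ℕ → ℤ} (hq : s q = 0) (hp : s p = 0) (n : ℕ) :
    (seq (inc q) (add q p)).run^[n] s = update (update s q n) p ((n + 1).choose 2 : ℕ) := by
  induction n with
  | zero => funext r; simp [Function.update_apply]; grind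
  | succ n ih =>
    have := Nat.choose_succ_succ' (n + 1) 1
    norm_num at this
    rw [Function.iterate_succ_apply', ih, run_seq, run_add (n := n + 1) (by simp [run, hqp])]
    funext r
    simp only [run, Function.update_apply]
    grind

theorem run_push {m a b : ℕ} {s : ℕ → ℤ} (ha : s m = a) (hb : s (m + 1) = b)
    (hs : ∀ r, m + 2 ≤ r → r ≤ m + 5 → s r = 0) :
    (push m).run s = put m (m + 1) s (0, code a b) := by
  have h2 := hs (m + 2) (by omega) (by omega)
  have h3 := hs (m + 3) (by omega) (by omega)
  have h4 := hs (m + 4) (by omega) (by omega)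
  have h5 := hs (m + 5) (by omega) (by omega)
  have hw : (walkP m (m + 1) (m + 5)).WF := wf_walkP (by omega) (by omega) (by omega)
  have h₁ : ∀ n, (walkP m (m + 1) (m + 5)).run^[n]
      (put m (m + 1) (update s (m + 4) (code a b)) (0, 0)) =
      put m (m + 1) (update s (m + 4) (code a b)) (walk^[n] (0, 0)) := by
    intro n
    induction n with
    | zero => rfl
    | succ n ih =>
      rw [Function.iterate_succ_apply', Function.iterate_succ_apply', ih,
        run_walkP (by omega) (by omega) (by omega) (by simpa)]
  -- Since `walk^[code a b] (0, 0) = (a, b)`, as many inverse steps lead back to the origin.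
  have h₂ : (walkP m (m + 1) (m + 5)).inv.run^[code a b] (update s (m + 4) (code a b)) =
      put m (m + 1) (update s (m + 4) (code a b)) (0, 0) := by
    have h := h₁ (code a b)
    rw [walk_code] at h
    have hp : put m (m + 1) (update s (m + 4) (code a b : ℤ)) (a, b) =
        update s (m + 4) (code a b) := by
      funext r
      simp only [put, Function.update_apply]
      grind
    rw [hp] at h
    have hi := Function.LeftInverse.iterate (run_inv_run hw) (code a b)
      (put m (m + 1) (update s (m + 4) (code a b)) (0, 0))
    rwa [h] at hi
  rw [push, run_seq, run_seq, run_seq]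
  -- The first phase leaves `code a b` in register `m + 4` and clears its other scratch registers.
  have h₃ : (seq (add m (m + 2)) (seq (add (m + 1) (m + 2))
      (seq (loop (m + 2) (seq (inc (m + 3)) (add (m + 3) (m + 4)))) (seq (add (m + 1) (m + 4))
      (seq (sub (m + 2) (m + 3)) (seq (sub m (m + 2)) (sub (m + 1) (m + 2)))))))).run s =
      update s (m + 4) (code a b) := by
    rw [run_seq, run_add ha, run_seq, run_add (n := b) (by simpa), run_seq,
      run_loop (n := a + b) (by simp [h2]), iterate_triangle (by omega) (by simpa) (by simpa),
      run_seq, run_add (n := b) (by simpa), run_seq, run_sub (n := a + b) (by simp [h2]),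
      run_seq, run_sub (a := m) (n := a) (by simpa),
      run_sub (a := m + 1) (n := b) (by simpa)]
    funext r
    simp only [code, Function.update_apply]
    grind
  rw [h₃, run_loop (n := code a b) (by simp), h₂, run_add (n := code a b) (by simp [put]),
    run_sub (n := code a b) (by simp [put])]
  funext r
  simp only [put, Function.update_apply]
  grind

end RPPx.Prog

namespace RPPx.Prog

open Function (update)

/-! ### Primitive recursive functions as register programs -/

/-- `P` adds `g` of the registers `xs` to the register `y`, with scratch space from `m` on. The
scratch registers hold zero initially, and again finally. -/
structure Computes {n : ℕ} (P : Prog) (xs : Fin n → ℕ) (y m : ℕ) (g : List.Vector ℕ n → ℕ) :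
    Prop where
  wf : P.WF
  vars_subset : ∀ r ∈ P.vars, (∃ j, xs j = r) ∨ r = y ∨ m ≤ r
  run_eq : ∀ (s : ℕ → ℤ) (v : List.Vector ℕ n), (∀ j, s (xs j) = v.get j) → (∀ r, m ≤ r → s r = 0) →
    P.run s = update s y (s y + g v)

/-- Running programs for several functions in turn, with consecutive output registers. -/
theorem exists_tuple {n k : ℕ} {g : Fin k → List.Vector ℕ n → ℕ}
    (hg : ∀ (i : Fin k) (xs : Fin n → ℕ) (y m : ℕ), (∀ j, xs j < m) → y < m → (∀ j, xs j ≠ y) →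
      ∃ P, Computes P xs y m (g i))
    {xs : Fin n → ℕ} {m : ℕ} (hxs : ∀ j, xs j < m) : ∀ l ≤ k, ∃ P : Prog, P.WF ∧
      (∀ r ∈ P.vars, (∃ j, xs j = r) ∨ m ≤ r) ∧
      ∀ (s : ℕ → ℤ) (v : List.Vector ℕ n), (∀ j, s (xs j) = v.get j) → (∀ r, m ≤ r → s r = 0) →
        (∀ r, r < m ∨ m + l ≤ r → P.run s r = s r) ∧
        ∀ i : Fin k, i.val < l → P.run s (m + i) = g i v := by
  intro l
  induction l with
  | zero =>
    intro _
    refine ⟨skip m, ⟨trivial, trivial⟩, ?_, ?_⟩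
    · intro r hr
      simp [skip, vars] at hr
      omega
    · intro s v _ _
      simp
  | succ l ih =>
    intro hl
    obtain ⟨P, hP, hPv, hPr⟩ := ih (by omega)
    obtain ⟨Q, hQ, hQv, hQr⟩ := hg ⟨l, hl⟩ xs (m + l) (m + k)
      (fun j => by have := hxs j; omega) (by omega) (fun j => by have := hxs j; omega)
    refine ⟨seq P Q, ⟨hP, hQ⟩, ?_, ?_⟩
    · intro r hr
      simp only [vars, Finset.mem_union] at hr
      rcases hr with hr | hr
      · exact hPv r hr
      · rcases hQv r hr with h | h | h
        · exact .inl h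
        · exact .inr (by omega)
        · exact .inr (by omega)
    · intro s v hs h0
      obtain ⟨h₁, h₂⟩ := hPr s v hs h0
      have h := hQr (P.run s) v (fun j => by rw [h₁ _ (.inl (hxs j)), hs])
        (fun r hr => by rw [h₁ _ (.inr (by omega)), h0 _ (by omega)])
      rw [run_seq, h]
      refine ⟨fun r hr => ?_, fun i hi => ?_⟩
      · rw [Function.update_of_ne (by omega), h₁ _ (by omega)]
      · rcases Nat.lt_succ_iff_lt_or_eq.1 hi with hi | hi
        · rw [Function.update_of_ne (by omega), h₂ i hi]
        · obtain rfl : i = ⟨l, hl⟩ := Fin.ext hi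
          rw [Function.update_self, h₁ _ (.inr le_rfl), h0 _ (by omega), zero_add]

/-- One round of a primitive recursion. The registers `m` and `m + 1` hold the current value and
the stack of previous values, `m + 2, …, m + 5` serve `push`, `m + 6` is the counter, and `G` puts
the next value into `m + 7`. Pushing the current value clears `m`, so that the next value can be
moved there reversibly. -/
def precStep (m : ℕ) (G : Prog) : Prog :=
  seq G (seq (push m) (seq (add (m + 7) m) (seq (sub m (m + 7)) (inc (m + 6)))))

/-- The stack of the values `f 0, …, f (t - 1)`, latest on top, coded as a number. -/
def history (f : ℕ → ℕ) : ℕ → ℕ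
  | 0 => 0
  | t + 1 => code (f t) (history f t)

/-- The program for a primitive recursion on register `x`, with `F` providing the initial value.
Register `m + 8` holds a copy of `x` that controls the loop, since `G` may mention `x`. The value is
computed in `m`, added to `y`, and then the computation is reverted. -/
def prec (x y m : ℕ) (F G : Prog) : Prog :=
  seq (seq F (seq (add x (m + 8)) (loop (m + 8) (precStep m G))))
    (seq (add m y) (seq F (seq (add x (m + 8)) (loop (m + 8) (precStep m G)))).inv)

/-- The state after `t` rounds of the recursion with values `f`, starting from `s`. -/
def precState (m : ℕ) (s : ℕ → ℤ) (f : ℕ → ℕ) (t : ℕ) : ℕ → ℤ :=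
  update (put m (m + 1) s (f t, history f t)) (m + 6) t

theorem iterate_precStep {m : ℕ} {G : Prog} {s : ℕ → ℤ} {f : ℕ → ℕ}
    (hs : ∀ r, m + 2 ≤ r → r ≤ m + 7 → s r = 0)
    (hG : ∀ t, G.run (precState m s f t) = update (precState m s f t) (m + 7) (f (t + 1))) (t : ℕ) :
    (precStep m G).run^[t] (precState m s f 0) = precState m s f t := by
  induction t with
  | zero => rfl
  | succ t ih =>
    have h7 := hs (m + 7) (by omega) (by omega)
    rw [Function.iterate_succ_apply', ih, precStep, run_seq, hG, run_seq,
      run_push (a := f t) (b := history f t), run_seq, run_add (n := f (t + 1)) (by simp [put]),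
      run_seq, run_sub (n := f (t + 1)) (by simp [put])]
    · funext r
      simp only [run, precState, put, history, Function.update_apply]
      grind
    · simp [precState, put]
    · simp [precState, put]
    · intro r h₁ h₂
      have := hs r h₁ (by omega)
      simp only [precState, put, Function.update_apply]
      grind

/-- By induction on the definition of `g`. In a composition or recursion the intermediate results
are left in scratch registers, copied to `y`, and then cleared by `run_sandwich`. -/
theorem exists_computes {n : ℕ} {g : List.Vector ℕ n → ℕ} (hg : Nat.Primrec' g) :
    ∀ (xs : Fin n → ℕ) (y m : ℕ), (∀ j, xs j < m) → y < m → (∀ j, xs j ≠ y) →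
      ∃ P, Computes P xs y m g := by
  induction hg with
  | zero =>
    intro xs y m _ _ _
    refine ⟨skip m, ⟨trivial, trivial⟩, ?_, ?_⟩
    · intro r hr
      simp [skip, vars] at hr
      omega
    · intro s v _ _
      simp
  | succ =>
    intro xs y m hxs hy hxy
    refine ⟨seq (add (xs 0) y) (inc y), ?_, ?_, ?_⟩
    · simp [WF, add, vars, hxy 0]
    · intro r hr
      simp [add, vars] at hr
      grind
    · intro s v hs _
      rw [run_seq, run_add (hs 0)]
      simp [run, add_assoc, List.Vector.get_zero]
  | get i =>
    intro xs y m hxs hy hxy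
    refine ⟨add (xs i) y, ?_, ?_, ?_⟩
    · simp [WF, add, vars, hxy i]
    · intro r hr
      simp [add, vars] at hr
      grind
    · intro s v hs _
      rw [run_add (hs i)]
  | @comp n k f g _ _ ihf ihg =>
    intro xs y m hxs hy hxy
    obtain ⟨P, hP, hPv, hPr⟩ := exists_tuple ihg hxs k le_rfl
    obtain ⟨Q, hQ, hQv, hQr⟩ := ihf (fun i => m + i) y (m + k)
      (fun i => by omega) (by omega) (fun i => by omega)
    refine ⟨seq P (seq Q P.inv), ⟨hP, hQ, hP.inv⟩, ?_, ?_⟩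
    · intro r hr
      simp only [vars, vars_inv, Finset.mem_union] at hr
      rcases hr with hr | hr | hr
      · exact (hPv r hr).imp_right .inr
      · rcases hQv r hr with ⟨i, h⟩ | h | h
        · exact .inr (.inr (by omega))
        · exact .inr (.inl h)
        · exact .inr (.inr (by omega))
      · exact (hPv r hr).imp_right .inr
    · intro s v hs h0
      obtain ⟨h₁, h₂⟩ := hPr s v hs h0
      refine run_sandwich hP ?_ ?_
      · intro h
        rcases hPv y h with ⟨j, h⟩ | h
        · exact hxy j h
        · omega
      · rw [hQr (P.run s) (List.Vector.ofFn fun i => g i v), h₁ y (.inl hy)]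
        · intro i
          rw [h₂ i i.2, List.Vector.get_ofFn]
        · intro r hr
          rw [h₁ r (.inr hr), h0 r (by omega)]
  | @prec n f g _ _ ihf ihg =>
    intro xs y m hxs hy hxy
    obtain ⟨F, hF, hFv, hFr⟩ := ihf (xs ∘ Fin.succ) m (m + 9)
      (fun j => by have := hxs j.succ; simp only [Function.comp_apply]; omega) (by omega)
      (fun j => by have := hxs j.succ; simp only [Function.comp_apply]; omega)
    obtain ⟨G, hG, hGv, hGr⟩ := ihg (Fin.cons (m + 6) (Fin.cons m (xs ∘ Fin.succ))) (m + 7) (m + 9)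
      (by
        refine Fin.cases ?_ (Fin.cases ?_ fun j => ?_)
        · simp
        · simp
        · have := hxs j.succ; simp; omega)
      (by omega)
      (by
        refine Fin.cases ?_ (Fin.cases ?_ fun j => ?_)
        · simp
        · simp
        · have := hxs j.succ; simp; omega)
    have hFv' : ∀ r ∈ F.vars, (∃ j, xs j = r) ∨ r = m ∨ m + 9 ≤ r := fun r hr =>
      (hFv r hr).imp_left fun ⟨j, h⟩ => ⟨j.succ, h⟩
    have hGv' : ∀ r ∈ G.vars,
        (∃ j, xs j = r) ∨ r = m ∨ r = m + 6 ∨ r = m + 7 ∨ m + 9 ≤ r := by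
      intro r hr
      rcases hGv r hr with ⟨j, h⟩ | h | h
      · revert h
        refine Fin.cases ?_ (fun j => Fin.cases ?_ (fun j => ?_) j) j
        · simp; omega
        · simp; omega
        · exact fun h => .inl ⟨j.succ, by simpa using h⟩
      · omega
      · omega
    have hWF : (seq F (seq (add (xs 0) (m + 8)) (loop (m + 8) (precStep m G)))).WF := by
      have h0 := hxs 0
      refine ⟨hF, ⟨by simp [vars]; omega, trivial⟩, ?_, hG, wf_push m, ?_⟩
      · intro h
        simp only [precStep, vars, add, sub, Finset.mem_union, Finset.mem_insert,
          Finset.mem_singleton] at h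
        rcases h with h | h | h
        · rcases hGv' _ h with ⟨j, h⟩ | h
          · have := hxs j; omega
          · omega
        · have := vars_push h; omega
        · omega
      · simp [WF, add, sub, vars]
    have hvars : ∀ r ∈ (seq F (seq (add (xs 0) (m + 8)) (loop (m + 8) (precStep m G)))).vars,
        (∃ j, xs j = r) ∨ m ≤ r := by
      intro r h
      simp only [precStep, vars, add, sub, Finset.mem_union, Finset.mem_insert,
        Finset.mem_singleton] at h
      have hp := @vars_push m r
      have := hFv' r
      have := hGv' r
      grind
    refine ⟨prec (xs 0) y m F G, ⟨hWF, ⟨?_, trivial⟩, hWF.inv⟩, ?_, ?_⟩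
    · simp [vars]; omega
    · intro r hr
      rw [prec, vars, vars.eq_3 (add m y), vars_inv] at hr
      simp only [Finset.mem_union] at hr
      rcases hr with hr | hr | hr
      · exact (hvars r hr).imp_right .inr
      · simp [add, vars] at hr
        omega
      · exact (hvars r hr).imp_right .inr
    · intro s v hs h0
      set φ : ℕ → ℕ := fun t => Nat.rec (f v.tail) (fun y IH => g (y ::ᵥ IH ::ᵥ v.tail)) t
      have hφ0 : φ 0 = f v.tail := rfl
      have hm : ∀ j, xs j ≠ m := fun j => (hxs j).ne
      have hx : ∀ (i : ℕ) j, xs j ≠ m + i := fun i j => by have := hxs j; omega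
      have hy' : ∀ i : ℕ, y ≠ m + i := fun i => by omega
      have hrun : (seq F (seq (add (xs 0) (m + 8)) (loop (m + 8) (precStep m G)))).run s =
          precState m (update s (m + 8) v.head) φ v.head := by
        have h1 : F.run s = update s m (f v.tail) := by
          rw [hFr s v.tail, h0 m le_rfl, zero_add]
          · intro j; simp [hs]
          · intro r hr; exact h0 r (by omega)
        rw [run_seq, h1, run_seq, run_add (n := v.head), run_loop (n := v.head),
          ← iterate_precStep]
        · congr 1
          funext r
          have := h0 (m + 1) (by omega)
          have := h0 (m + 6) (by omega)
          have := h0 (m + 8) (by omega)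
          simp only [precState, put, history, Function.update_apply, hφ0]
          grind
        · intro r h₁ h₂
          rw [Function.update_of_ne (by omega), h0 r (by omega)]
        · intro t
          rw [hGr _ (t ::ᵥ φ t ::ᵥ v.tail)]
          · have : precState m (update s (m + 8) v.head) φ t (m + 7) = 0 := by
              simp [precState, put, h0]
            rw [this, zero_add]
          · refine Fin.cases ?_ (fun j => Fin.cases ?_ (fun j => ?_) j)
            · simp [precState]
            · rw [List.Vector.get_cons_succ, List.Vector.get_cons_zero]
              simp [precState, put]
            · simp [precState, put, hx, hm, hs]
          · intro r hr
            rw [precState, put, Function.update_of_ne (by omega), Function.update_of_ne (by omega),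
              Function.update_of_ne (by omega), Function.update_of_ne (by omega), h0 r (by omega)]
        · have := h0 (m + 8) (by omega)
          simp [this]
        · rw [Function.update_of_ne (hm 0), hs, List.Vector.get_zero]
      refine run_sandwich hWF ?_ ?_
      · intro h
        rcases hvars y h with ⟨j, h⟩ | h
        · exact hxy j h
        · omega
      · rw [hrun, run_add (n := φ v.head) (by simp [precState, put])]
        congr 2
        simp [precState, put, hy', hy.ne]

/-- Every primitive recursive function is computed by a well-formed register program. -/
theorem exists_prog {g : ℕ → ℕ} (hg : Nat.Primrec g) : ∃ P : Prog, P.WF ∧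
    ∀ x : ℕ, P.run (fun r => if r = 0 then (x : ℤ) else 0) 1 = g x := by
  obtain ⟨P, hP⟩ := exists_computes (Nat.Primrec'.prim_iff₁.2 (Primrec.nat_iff.2 hg))
    (fun _ => 0) 1 2 (by simp) (by simp) (by simp)
  refine ⟨P, hP.wf, fun x => ?_⟩
  rw [hP.run_eq _ (x ::ᵥ List.Vector.nil)]
  · simp
  · intro j
    simp
  · intro r hr
    exact if_neg (by omega)

/-- Every primitive recursive function is represented by an RPP function, with zeros on all wires
other than the input. -/
theorem exists_rpp {g : ℕ → ℕ} (hg : Nat.Primrec g) : ∃ (k : ℕ) (f : RPP k) (i o : Fin k),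
    ∀ x : ℕ, eval f (fun j => if j = i then (x : ℤ) else 0) o = g x := by
  obtain ⟨P, hP, h⟩ := exists_prog hg
  obtain ⟨f, hf⟩ := comp_of_wf hP (k := P.vars.sup id + 2) Fin.val_injective fun r hr =>
    ⟨⟨r, by have := Finset.le_sup (f := id) hr; simp only [id] at this; omega⟩, rfl⟩
  refine ⟨_, f, ⟨0, by omega⟩, ⟨1, by omega⟩, fun x => ?_⟩
  have hs : (fun r : ℕ => if r = 0 then (x : ℤ) else 0) ∘ Fin.val =
      fun j : Fin (P.vars.sup id + 2) => if j = ⟨0, by omega⟩ then (x : ℤ) else 0 := by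
    funext j
    simp only [Function.comp_apply, Fin.ext_iff]
  rw [← hs, hf]
  exact h x

end RPPx.Prog

open LinRev in
/-- simulation of RPP. For every `f ∈ RPP^k` and integers
`n₁,…,n_k` with `f(n⃗) = m⃗`, the iso `isos(f)` applied to the encoding of `n⃗`
evaluates to the encoding of `m⃗`. Consequently, every primitive recursive
function is represented by a well-typed iso. -/
theorem rpp_simulation :
    (∀ (k : ℕ) (f : RPPx.RPP k) (n m : Fin k → ℤ), RPPx.eval f n = m →
      Steps (.app (isosOf f) (encTup n).toTerm) ((encTup m).toTerm)) ∧
    (∀ g : ℕ → ℕ, Nat.Primrec g →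
      ∃ (k : ℕ) (f : RPPx.RPP k) (i o : Fin k),
        IsoTy none (isosOf f) (Zpow k) (Zpow k) ∧
        ∀ x : ℕ, RPPx.eval f (fun j => if j = i then (x : ℤ) else 0) o = (g x : ℤ)) := by
  refine ⟨fun k f n m h => ?_, fun g hg => ?_⟩
  · subst h
    exact simulation f n
  · obtain ⟨k, f, i, o, h⟩ := RPPx.Prog.exists_rpp hg
    exact ⟨k, f, i, o, isosOf_ty f, h⟩
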